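/- arXiv:math/9808107 — 2 statements merged into one kernel-verified Lean document; each statement's English description precedes it below -/
import Mathlib

section
/- For every positive integer n, the following identity holds in the formal power series ring ℚ[[x_1, …, x_n]]: ∑_{λ : λ' even} det((x_i^{λ_j + n − j})_{1≤i,j≤n}) · ∏_{1 ≤ i < j ≤ n} (1 − x_i x_j) = ∏_{1 ≤ i < j ≤ n} (x_i − x_j), where the sum is over all partitions λ = (λ_1 ≥ ⋯ ≥ λ_n ≥ 0) with at most n parts whose conjugate partition λ' has all parts even (the family is summable, since for each monomial only finitely many λ contribute). Equivalently (Littlewood): ∑_{λ' even} s_λ(x_1,…,x_n) = ∏_{i<j} 1/(1 − x_i x_j). -/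
section Interpolation

open Polynomial

variable {K : Type*} [Field K]

/-- Divided differences of a polynomial of small degree vanish. -/
theorem sum_eval_div_prod_erase_eq_zero [DecidableEq K] (S : Finset K) (P : K[X])
    (hP : P.natDegree + 1 < S.card) :
    ∑ a ∈ S, P.eval a / ∏ b ∈ S.erase a, (a - b) = 0 := by
  have h := Lagrange.coeff_eq_sum (s := S) (v := id) Function.injective_id.injOn (P := P)
    (lt_of_le_of_lt degree_le_natDegree (by exact_mod_cast (by omega)))
  rw [coeff_eq_zero_of_natDegree_lt (by omega)] at h
  simpa using h.symm

theorem sum_div_prod_erase_insert [DecidableEq K] {T : Finset K} {c : K} (hc : c ∉ T)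
    (f : K → K) :
    ∑ a ∈ insert c T, f a / ∏ b ∈ (insert c T).erase a, (a - b) =
      f c / ∏ b ∈ T, (c - b) + ∑ a ∈ T, f a / (a - c) / ∏ b ∈ T.erase a, (a - b) := by
  rw [Finset.sum_insert hc, Finset.erase_insert hc]
  congr 1
  refine Finset.sum_congr rfl fun a ha => ?_
  have hac : c ≠ a := fun h => hc (h ▸ ha)
  rw [Finset.erase_insert_of_ne hac, Finset.prod_insert (by simp [hc]), div_div]

theorem natDegree_prod_one_sub_C_mul_X_le (T : Finset K) :
    (∏ b ∈ T, (1 - C b * X)).natDegree ≤ T.card := by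
  refine (natDegree_prod_le _ _).trans ?_
  refine (Finset.sum_le_card_nsmul _ _ 1 fun b _ => ?_).trans (by simp)
  compute_degree

theorem sum_insert_one_neg_one_of_odd [DecidableEq K] (h2 : (2 : K) ≠ 0) {T : Finset K}
    (hodd : Odd T.card) (hT : ∀ a ∈ T, ∀ b ∈ T, 1 - a * b ≠ 0) (g : K → K) :
    ∑ a ∈ insert 1 (insert (-1) T), (∏ b ∈ T, (1 - b * a)) * g a /
        ∏ b ∈ (insert 1 (insert (-1) T)).erase a, (a - b) =
      (g 1 + g (-1)) / 2 - ∑ a ∈ T, g a * ∏ b ∈ T.erase a, ((1 - a * b) / (a - b)) := by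
  have h1 : (1 : K) ∉ T := fun h => hT _ h _ h (by ring)
  have hm1 : (-1 : K) ∉ T := fun h => hT _ h _ h (by ring)
  have h11 : (1 : K) ≠ -1 := fun h => h2 (by linear_combination h)
  have h1' : (1 : K) ∉ insert (-1) T := by simp [h1, h11]
  rw [sum_div_prod_erase_insert h1', sum_div_prod_erase_insert hm1, Finset.prod_insert hm1]
  have p1 : ∏ b ∈ T, (1 - b) ≠ 0 :=
    Finset.prod_ne_zero_iff.2 fun b hb => sub_ne_zero.2 fun h => h1 (h ▸ hb)
  have pm1 : ∏ b ∈ T, (1 + b) ≠ 0 :=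
    Finset.prod_ne_zero_iff.2 fun b hb h => hm1 ((eq_neg_of_add_eq_zero_right h) ▸ hb)
  have pneg : ∏ b ∈ T, (-1 - b) = -∏ b ∈ T, (1 + b) := by
    rw [Finset.prod_congr rfl fun b _ => (neg_add' 1 b).symm, Finset.prod_neg, hodd.neg_one_pow,
      neg_one_mul]
  have es : ∑ a ∈ T, (∏ b ∈ T, (1 - b * a)) * g a / (a - 1) / (a - -1) /
        ∏ b ∈ T.erase a, (a - b) =
      - ∑ a ∈ T, g a * ∏ b ∈ T.erase a, ((1 - a * b) / (a - b)) := by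
    rw [← Finset.sum_neg_distrib]
    refine Finset.sum_congr rfl fun a ha => ?_
    rw [← Finset.mul_prod_erase _ _ ha, Finset.prod_div_distrib]
    have n1 : ∏ b ∈ T.erase a, (a - b) ≠ 0 := Finset.prod_ne_zero_iff.2 fun b hb =>
      sub_ne_zero.2 (Finset.ne_of_mem_erase hb).symm
    have n2 : (a - 1) * (a - -1) ≠ 0 := fun h => hT a ha a ha (by linear_combination -h)
    have n3 := left_ne_zero_of_mul n2
    have n4 := right_ne_zero_of_mul n2
    have : ∏ b ∈ T.erase a, (1 - a * b) = ∏ b ∈ T.erase a, (1 - b * a) := by simp [mul_comm]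
    rw [this]
    field_simp
    ring
  rw [es, pneg]
  simp only [mul_one, mul_neg, sub_neg_eq_add]
  have h4 : (-1 - 1 : K) = -2 := by ring
  have h5 : (1 + 1 : K) = 2 := by ring
  rw [h4, h5]
  field_simp
  ring

/-- The odd case of Schur's Pfaffian identity, in interpolation form. -/
theorem sum_prod_one_sub_mul_div_sub_of_odd [DecidableEq K] (h2 : (2 : K) ≠ 0) (T : Finset K)
    (hodd : Odd T.card) (hT : ∀ a ∈ T, ∀ b ∈ T, 1 - a * b ≠ 0) :
    ∑ a ∈ T, ∏ b ∈ T.erase a, ((1 - a * b) / (a - b)) = 1 := by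
  have h1 : (1 : K) ∉ T := fun h => hT _ h _ h (by ring)
  have hm1 : (-1 : K) ∉ T := fun h => hT _ h _ h (by ring)
  have h11 : (1 : K) ≠ -1 := fun h => h2 (by linear_combination h)
  have h := sum_eval_div_prod_erase_eq_zero (insert 1 (insert (-1) T)) (∏ b ∈ T, (1 - C b * X)) (by
    rw [Finset.card_insert_of_notMem (by simp [h1, h11]), Finset.card_insert_of_notMem hm1]
    have := natDegree_prod_one_sub_C_mul_X_le T
    omega)
  have e := sum_insert_one_neg_one_of_odd h2 hodd hT (fun _ => 1)
  simp only [eval_prod, eval_sub, eval_one, eval_mul, eval_C, eval_X] at h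
  simp only [mul_one, one_mul, h] at e
  have h3 : ((1 + 1) / 2 : K) = 1 := by field_simp; norm_num
  rw [h3] at e
  linear_combination e

/-- The even case of Schur's Pfaffian identity, in interpolation form. -/
theorem sum_div_mul_prod_one_sub_mul_div_sub_of_odd [DecidableEq K] (h2 : (2 : K) ≠ 0)
    (T : Finset K) (hodd : Odd T.card) (hT : ∀ a ∈ T, ∀ b ∈ T, 1 - a * b ≠ 0) {t : K} (ht : t ≠ 0)
    (htt : 1 - t * t ≠ 0) (htT : ∀ a ∈ T, 1 - a * t ≠ 0) :
    ∑ a ∈ T, (a - t) / (1 - a * t) * ∏ b ∈ T.erase a, ((1 - a * b) / (a - b)) =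
      ∏ a ∈ T, ((a - t) / (1 - a * t)) := by
  have h1 : (1 : K) ∉ T := fun h => hT _ h _ h (by ring)
  have hm1 : (-1 : K) ∉ T := fun h => hT _ h _ h (by ring)
  have h11 : (1 : K) ≠ -1 := fun h => h2 (by linear_combination h)
  have t1 : 1 - t ≠ 0 := fun h => htt (by linear_combination (1 + t) * h)
  have tm1 : 1 + t ≠ 0 := fun h => htt (by linear_combination (1 - t) * h)
  have huT : t⁻¹ ∉ T := fun h => htT _ h (by field_simp; ring)
  have hu1 : t⁻¹ ≠ 1 := fun h => t1 (by rw [inv_eq_one] at h; simp [h])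
  have hum1 : t⁻¹ ≠ -1 := fun h => tm1 (by rw [inv_eq_iff_eq_inv] at h; simp [h])
  have hu : t⁻¹ ∉ insert 1 (insert (-1) T) := by simp [huT, hu1, hum1]
  have h := sum_eval_div_prod_erase_eq_zero (insert t⁻¹ (insert 1 (insert (-1) T)))
    ((∏ b ∈ T, (1 - C b * X)) * (X - C t)) (by
    rw [Finset.card_insert_of_notMem hu, Finset.card_insert_of_notMem (by simp [h1, h11]),
      Finset.card_insert_of_notMem hm1]
    have h3 := natDegree_prod_one_sub_C_mul_X_le T
    have h4 := natDegree_mul_le (p := ∏ b ∈ T, (1 - C b * X)) (q := X - C t)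
    rw [natDegree_X_sub_C] at h4
    omega)
  have e := sum_insert_one_neg_one_of_odd h2 hodd hT (fun a => (a - t) / (a - t⁻¹))
  rw [sum_div_prod_erase_insert hu, Finset.prod_insert (by simp [h1, h11]),
    Finset.prod_insert hm1] at h
  simp only [eval_prod, eval_sub, eval_one, eval_mul, eval_C, eval_X, mul_div_assoc] at h e
  rw [e] at h
  have h3 : (1 - t) / (1 - t⁻¹) + (-1 - t) / (-1 - t⁻¹) = 0 := by
    have : t - 1 ≠ 0 := fun h => t1 (by linear_combination -h)
    have : -t - 1 ≠ 0 := fun h => tm1 (by linear_combination -h)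
    have : 1 - t⁻¹ ≠ 0 := sub_ne_zero.2 hu1.symm
    have : -1 - t⁻¹ ≠ 0 := sub_ne_zero.2 hum1.symm
    field_simp
    ring
  have h4 : ∏ b ∈ T, (t⁻¹ - b) ≠ 0 := Finset.prod_ne_zero_iff.2 fun b hb =>
    sub_ne_zero.2 fun h => huT (h ▸ hb)
  have h5 : ∑ a ∈ T, (a - t) / (a - t⁻¹) * ∏ b ∈ T.erase a, ((1 - a * b) / (a - b)) =
      -t * ∑ a ∈ T, (a - t) / (1 - a * t) * ∏ b ∈ T.erase a, ((1 - a * b) / (a - b)) := by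
    rw [Finset.mul_sum]
    refine Finset.sum_congr rfl fun a ha => ?_
    have := htT a ha
    have h6 : a - t⁻¹ = -(1 - a * t) / t := by field_simp; ring
    rw [h6]
    field_simp
  have h7 : (∏ b ∈ T, (1 - b * t⁻¹)) / ∏ b ∈ T, (t⁻¹ - b) = - ∏ a ∈ T, ((a - t) / (1 - a * t)) := by
    rw [← neg_one_mul (∏ a ∈ T, _), ← hodd.neg_one_pow, ← Finset.prod_neg,
      ← Finset.prod_div_distrib]
    refine Finset.prod_congr rfl fun b hb => ?_
    have h8 := htT b hb
    have h6 : t⁻¹ - b = (1 - b * t) / t := by field_simp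
    rw [h6]
    field_simp
    ring
  have h8 : (t⁻¹ - t) / ((t⁻¹ - 1) * (t⁻¹ - -1)) = t := by
    have h9 : (t⁻¹ - 1) * (t⁻¹ - -1) ≠ 0 := mul_ne_zero (sub_ne_zero.2 hu1) (sub_ne_zero.2 hum1)
    rw [div_eq_iff h9]
    field_simp
    ring
  have h9 : (∏ b ∈ T, (1 - b * t⁻¹)) *
        ((t⁻¹ - t) / ((t⁻¹ - 1) * ((t⁻¹ - -1) * ∏ b ∈ T, (t⁻¹ - b)))) =
      (∏ b ∈ T, (1 - b * t⁻¹)) / (∏ b ∈ T, (t⁻¹ - b)) *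
        ((t⁻¹ - t) / ((t⁻¹ - 1) * (t⁻¹ - -1))) := by
    rw [div_mul_div_comm, mul_div_assoc]
    congr 2
    ring
  rw [h3, h5, h9, h8, h7] at h
  refine mul_left_cancel₀ ht ?_
  linear_combination h

end Interpolation

section PairProd

variable {ι : Type*} [LinearOrder ι]

/-- The product of `f i j` over all pairs `i < j` in `S`. -/
def pairProd {R : Type*} [CommMonoid R] (f : ι → ι → R) (S : Finset ι) : R :=
  ∏ i ∈ S, ∏ j ∈ S with i < j, f i j

variable {R : Type*} [CommRing R] {f : ι → ι → R}

theorem map_pairProd {R' : Type*} [CommRing R'] (φ : R →+* R') (S : Finset ι) :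
    φ (pairProd f S) = pairProd (fun i j => φ (f i j)) S := by
  simp [pairProd]

theorem pairProd_insert (hf : ∀ i j, f i j = -f j i) {T : Finset ι} {a : ι} (ha : a ∉ T) :
    pairProd f (insert a T) =
      (-1) ^ (T.filter (a < ·)).card * (∏ b ∈ T, f b a) * pairProd f T := by
  have h1 : ∀ i ∈ T, ∏ j ∈ insert a T with i < j, f i j =
      (if i < a then f i a else 1) * ∏ j ∈ T with i < j, f i j := by
    intro i _
    rw [Finset.filter_insert]
    split_ifs with h
    · rw [Finset.prod_insert (by simp [ha])]
    · rw [one_mul]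
  have h2 : ∏ j ∈ T with a < j, f a j =
      (-1) ^ (T.filter (a < ·)).card * ∏ j ∈ T with a < j, f j a := by
    rw [← Finset.prod_neg]
    exact Finset.prod_congr rfl fun j _ => hf a j
  have h3 : T.filter (fun i => ¬ i < a) = T.filter (a < ·) := by
    refine Finset.filter_congr fun i hi => ?_
    have : i ≠ a := fun h => ha (h ▸ hi)
    rw [not_lt, le_iff_lt_or_eq]
    simp [this.symm]
  rw [pairProd, Finset.prod_insert ha, Finset.filter_insert, if_neg (lt_irrefl a),
    Finset.prod_congr rfl h1, Finset.prod_mul_distrib, ← Finset.prod_filter, h2,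
    ← Finset.prod_filter_mul_prod_filter_not T (· < a) (fun b => f b a), h3, pairProd]
  ring

end PairProd

section SchurRecursion

variable {ι : Type*} [LinearOrder ι] {K : Type*} [Field K] {y : ι → K}

theorem pairProd_erase_eq_mul_prod_inv {f : ι → ι → K} (hf : ∀ i j, f i j = -f j i)
    (hf0 : ∀ i j, i ≠ j → f i j ≠ 0) {T : Finset ι} (hT : Odd T.card) {a : ι} (ha : a ∈ T) :
    (-1) ^ (T.filter (a < ·)).card * pairProd f (T.erase a) =
      pairProd f T * ∏ b ∈ T.erase a, (f a b)⁻¹ := by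
  have hev : Even (T.erase a).card := by
    rw [Finset.card_erase_of_mem ha]
    exact Nat.Odd.sub_odd hT odd_one
  have h1 : (T.erase a).filter (a < ·) = T.filter (a < ·) := by
    ext b
    simp only [Finset.mem_filter, Finset.mem_erase]
    exact ⟨fun h => ⟨h.1.2, h.2⟩, fun h => ⟨⟨h.2.ne', h.1⟩, h.2⟩⟩
  have h2 : ∏ b ∈ T.erase a, f b a = ∏ b ∈ T.erase a, f a b := by
    rw [Finset.prod_congr rfl fun b _ => hf b a, Finset.prod_neg, hev.neg_one_pow, one_mul]
  have h3 : ∏ b ∈ T.erase a, f a b ≠ 0 := Finset.prod_ne_zero_iff.2 fun b hb =>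
    hf0 _ _ (Finset.ne_of_mem_erase hb).symm
  have h4 := pairProd_insert hf (Finset.notMem_erase a T)
  rw [Finset.insert_erase ha, h1, h2] at h4
  rw [h4, Finset.prod_inv_distrib]
  field_simp

theorem pairProd_schur_odd (h2 : (2 : K) ≠ 0) (hy : Function.Injective y)
    (hyy : ∀ i j, 1 - y i * y j ≠ 0) {T : Finset ι} (hT : Odd T.card) :
    pairProd (fun i j => (y i - y j) / (1 - y i * y j)) T =
      ∑ a ∈ T, (-1) ^ (T.filter (a < ·)).card *
        pairProd (fun i j => (y i - y j) / (1 - y i * y j)) (T.erase a) := by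
  classical
  have hf : ∀ i j, (y i - y j) / (1 - y i * y j) = -((y j - y i) / (1 - y j * y i)) := fun i j => by
    rw [mul_comm (y j), ← neg_div, neg_sub]
  rw [Finset.sum_congr rfl fun a ha => pairProd_erase_eq_mul_prod_inv hf
    (fun i j hij => div_ne_zero (sub_ne_zero.2 (hy.ne hij)) (hyy i j)) hT ha, ← Finset.mul_sum]
  have h := sum_prod_one_sub_mul_div_sub_of_odd h2 (T.image y)
    (by rwa [Finset.card_image_of_injective _ hy]) (by simp [hyy])
  rw [Finset.sum_image hy.injOn] at h
  simp_rw [← Finset.image_erase hy, Finset.prod_image hy.injOn] at h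
  simp_rw [inv_div, h, mul_one]

theorem pairProd_schur_even (h2 : (2 : K) ≠ 0) (hy : Function.Injective y) (hy0 : ∀ i, y i ≠ 0)
    (hyy : ∀ i j, 1 - y i * y j ≠ 0) {T : Finset ι} (hT : Odd T.card) {t : ι}
    (ht : ∀ a ∈ T, a < t) :
    pairProd (fun i j => (y i - y j) / (1 - y i * y j)) (insert t T) =
      ∑ a ∈ T, (-1) ^ (T.filter (a < ·)).card * ((y a - y t) / (1 - y a * y t) *
        pairProd (fun i j => (y i - y j) / (1 - y i * y j)) (T.erase a)) := by
  classical
  have hf : ∀ i j, (y i - y j) / (1 - y i * y j) = -((y j - y i) / (1 - y j * y i)) := fun i j => by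
    rw [mul_comm (y j), ← neg_div, neg_sub]
  have htT : T.filter (t < ·) = ∅ := Finset.filter_eq_empty_iff.2 fun a ha => (ht a ha).not_gt
  simp_rw [mul_left_comm]
  rw [Finset.sum_congr rfl fun a ha => congrArg _ (pairProd_erase_eq_mul_prod_inv hf
    (fun i j hij => div_ne_zero (sub_ne_zero.2 (hy.ne hij)) (hyy i j)) hT ha),
    pairProd_insert hf fun h => (ht t h).ne rfl, htT]
  have h := sum_div_mul_prod_one_sub_mul_div_sub_of_odd h2 (T.image y)
    (by rwa [Finset.card_image_of_injective _ hy]) (by simp [hyy]) (hy0 t) (hyy t t) (by simp [hyy])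
  rw [Finset.sum_image hy.injOn] at h
  simp_rw [← Finset.image_erase hy, Finset.prod_image hy.injOn] at h
  simp_rw [mul_left_comm _ (pairProd _ _), ← Finset.mul_sum, inv_div, h]
  simp [mul_comm]

end SchurRecursion

section PowerSeries

open MvPowerSeries

variable {σ : Type*}

/-- The entry `(x_i - x_j) / (1 - x_i x_j)` of Schur's Pfaffian, as a power series. -/
noncomputable def schurEntry (i j : σ) : MvPowerSeries σ ℚ :=
  (X i - X j) * (1 - X i * X j)⁻¹

theorem one_sub_X_mul_X_mul_schurEntry (i j : σ) :
    (1 - X i * X j) * schurEntry i j = (X i - X j : MvPowerSeries σ ℚ) := by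
  rw [schurEntry, mul_left_comm, MvPowerSeries.mul_inv_cancel _ (by simp), mul_one]

theorem one_sub_X_mul_X_ne_zero (i j : σ) : (1 - X i * X j : MvPowerSeries σ ℚ) ≠ 0 := fun h => by
  simpa using congrArg constantCoeff h

theorem schurEntry_antisymm (i j : σ) : schurEntry i j = -schurEntry j i := by
  rw [schurEntry, schurEntry, mul_comm (X j) (X i), ← neg_mul, neg_sub]

theorem powerSeries_X_ne_zero (i : σ) : (X i : MvPowerSeries σ ℚ) ≠ 0 := fun h => by
  simpa using congrArg (coeff (Finsupp.single i 1)) h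

section Map

variable {K : Type*} [Field K] {φ : MvPowerSeries σ ℚ →+* K}

theorem one_sub_map_X_mul_map_X_ne_zero (hφ : Function.Injective φ) (i j : σ) :
    1 - φ (X i) * φ (X j) ≠ 0 := by
  rw [← map_mul, ← map_one φ, ← map_sub]
  exact (map_ne_zero_iff φ hφ).2 (one_sub_X_mul_X_ne_zero i j)

theorem map_schurEntry (hφ : Function.Injective φ) (i j : σ) :
    φ (schurEntry i j) = (φ (X i) - φ (X j)) / (1 - φ (X i) * φ (X j)) := by
  rw [eq_div_iff (one_sub_map_X_mul_map_X_ne_zero hφ i j), mul_comm]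
  simpa using congrArg φ (one_sub_X_mul_X_mul_schurEntry i j)

theorem two_ne_zero_of_injective (hφ : Function.Injective φ) : (2 : K) ≠ 0 := by
  have h : φ (C 2) = 2 := by rw [map_ofNat, map_ofNat]
  rw [← h]
  exact (map_ne_zero_iff φ hφ).2 fun h => by simpa using congrArg constantCoeff h

end Map

variable [LinearOrder σ]

theorem pairProd_schurEntry_odd {T : Finset σ} (hT : Odd T.card) :
    pairProd schurEntry T =
      ∑ a ∈ T, (-1) ^ (T.filter (a < ·)).card * pairProd schurEntry (T.erase a) := by
  have hφ := FaithfulSMul.algebraMap_injective (MvPowerSeries σ ℚ)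
    (FractionRing (MvPowerSeries σ ℚ))
  apply hφ
  simp only [map_sum, map_mul, map_pow, map_neg, map_one, map_pairProd, map_schurEntry hφ]
  exact pairProd_schur_odd (two_ne_zero_of_injective hφ) (hφ.comp fun _ _ h => X_inj.1 h)
    (one_sub_map_X_mul_map_X_ne_zero hφ) hT

theorem pairProd_schurEntry_even {T : Finset σ} (hT : Odd T.card) {t : σ} (ht : ∀ a ∈ T, a < t) :
    pairProd schurEntry (insert t T) =
      ∑ a ∈ T, (-1) ^ (T.filter (a < ·)).card *
        (schurEntry a t * pairProd schurEntry (T.erase a)) := by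
  have hφ := FaithfulSMul.algebraMap_injective (MvPowerSeries σ ℚ)
    (FractionRing (MvPowerSeries σ ℚ))
  apply hφ
  simp only [map_sum, map_mul, map_pow, map_neg, map_one, map_pairProd, map_schurEntry hφ]
  exact pairProd_schur_even (two_ne_zero_of_injective hφ) (hφ.comp fun _ _ h => X_inj.1 h)
    (fun i => (map_ne_zero_iff _ hφ).2 (powerSeries_X_ne_zero i))
    (one_sub_map_X_mul_map_X_ne_zero hφ) hT ht

end PowerSeries

section Support

open MvPowerSeries

variable {σ : Type*}

/-- The power series `f` involves only the variables in `S`. -/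
def InvolvesOnly (S : Finset σ) (f : MvPowerSeries σ ℚ) : Prop :=
  ∀ ν, ∀ i ∉ S, ν i ≠ 0 → coeff ν f = 0

theorem InvolvesOnly.mul {S : Finset σ} {f g : MvPowerSeries σ ℚ} (hf : InvolvesOnly S f)
    (hg : InvolvesOnly S g) : InvolvesOnly S (f * g) := by
  classical
  intro ν i hi hν
  rw [coeff_mul]
  refine Finset.sum_eq_zero fun p hp => ?_
  rw [Finset.HasAntidiagonal.mem_antidiagonal] at hp
  by_cases h : p.1 i = 0
  · rw [hg p.2 i hi fun h' => hν (by rw [← hp, Finsupp.add_apply, h, h']), mul_zero]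
  · rw [hf p.1 i hi h, zero_mul]

theorem InvolvesOnly.sub {S : Finset σ} {f g : MvPowerSeries σ ℚ} (hf : InvolvesOnly S f)
    (hg : InvolvesOnly S g) : InvolvesOnly S (f - g) := fun ν i hi hν => by
  rw [map_sub, hf ν i hi hν, hg ν i hi hν, sub_zero]

theorem involvesOnly_one (S : Finset σ) : InvolvesOnly S 1 := fun ν i _ hν => by
  classical
  rw [coeff_one, if_neg]
  rintro rfl
  exact hν rfl

theorem involvesOnly_X {S : Finset σ} {i : σ} (hi : i ∈ S) : InvolvesOnly S (X i) :=
  fun ν j hj hν => by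
    classical
    rw [coeff_X, if_neg]
    rintro rfl
    exact hν (Finsupp.single_eq_of_ne fun h => hj (h ▸ hi))

theorem InvolvesOnly.prod {ι : Type*} {S : Finset σ} {s : Finset ι} {f : ι → MvPowerSeries σ ℚ}
    (h : ∀ i ∈ s, InvolvesOnly S (f i)) : InvolvesOnly S (∏ i ∈ s, f i) :=
  Finset.prod_induction f (InvolvesOnly S) (fun _ _ => InvolvesOnly.mul) (involvesOnly_one S) h

theorem coeff_X_mul_eq_ite [DecidableEq σ] (ν : σ →₀ ℕ) (i : σ) (f : MvPowerSeries σ ℚ) :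
    coeff ν (X i * f) = if ν i = 0 then 0 else coeff (ν - Finsupp.single i 1) f := by
  rw [X_def, coeff_monomial_mul, one_mul]
  simp only [Finsupp.single_le_iff, Nat.one_le_iff_ne_zero, ite_not]

theorem coeff_eq_of_one_sub_X_mul_X_mul_eq [DecidableEq σ] {i j : σ} (hij : i ≠ j)
    {B C : MvPowerSeries σ ℚ} (h : (1 - X i * X j) * B = C) (ν : σ →₀ ℕ) :
    coeff ν B = coeff ν C + if ν i = 0 ∨ ν j = 0 then 0 else
      coeff (ν - Finsupp.single i 1 - Finsupp.single j 1) B := by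
  rw [← h, sub_mul, one_mul, map_sub, mul_assoc, coeff_X_mul_eq_ite, coeff_X_mul_eq_ite]
  have : (ν - Finsupp.single i 1 : σ →₀ ℕ) j = ν j := by simp [hij.symm]
  rw [this]
  split_ifs <;> simp_all

theorem InvolvesOnly.of_one_sub_X_mul_X_mul {S : Finset σ} {i j : σ} (hij : i ≠ j) (hi : i ∈ S)
    (hj : j ∈ S) {B : MvPowerSeries σ ℚ} (h : InvolvesOnly S ((1 - X i * X j) * B)) :
    InvolvesOnly S B := by
  classical
  intro ν a ha hν
  have hai : i ≠ a := fun h => ha (h ▸ hi)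
  have haj : j ≠ a := fun h => ha (h ▸ hj)
  induction hm : ν i generalizing ν with
  | zero => rw [coeff_eq_of_one_sub_X_mul_X_mul_eq hij rfl, h ν a ha hν, if_pos (.inl hm), add_zero]
  | succ m ih =>
    rw [coeff_eq_of_one_sub_X_mul_X_mul_eq hij rfl, h ν a ha hν, zero_add]
    split_ifs
    · rfl
    · exact ih _ (by simpa [hai, haj] using hν) (by simp [hm, hij])

theorem involvesOnly_schurEntry {S : Finset σ} {i j : σ} (hij : i ≠ j) (hi : i ∈ S) (hj : j ∈ S) :
    InvolvesOnly S (schurEntry i j) := by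
  refine .of_one_sub_X_mul_X_mul hij hi hj ?_
  rw [one_sub_X_mul_X_mul_schurEntry]
  exact (involvesOnly_X hi).sub (involvesOnly_X hj)

theorem involvesOnly_pairProd_schurEntry [LinearOrder σ] (S : Finset σ) :
    InvolvesOnly S (pairProd schurEntry S) :=
  .prod fun _ hi => .prod fun _ hj =>
    involvesOnly_schurEntry (Finset.mem_filter.1 hj).2.ne hi (Finset.mem_filter.1 hj).1

theorem coeff_schurEntry_mul [DecidableEq σ] {T : Finset σ} {i t : σ} (hi : i ∉ T) (ht : t ∉ T)
    (hit : i ≠ t) {G : MvPowerSeries σ ℚ} (hG : InvolvesOnly T G) (ν : σ →₀ ℕ) (hν : ν t < ν i) :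
    coeff ν (schurEntry i t * G) =
      if ν i = ν t + 1 then coeff ((ν.erase i).erase t) G else 0 := by
  have h : (1 - X i * X t) * (schurEntry i t * G) = (X i - X t) * G := by
    rw [← mul_assoc, one_sub_X_mul_X_mul_schurEntry]
  induction hm : ν t generalizing ν with
  | zero =>
    rw [coeff_eq_of_one_sub_X_mul_X_mul_eq hit h, if_pos (.inr hm), add_zero, sub_mul, map_sub,
      coeff_X_mul_eq_ite, coeff_X_mul_eq_ite, if_pos hm, if_neg (by omega), sub_zero]
    split_ifs with h1
    · congr 2
      ext a
      by_cases hat : a = t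
      · simp [hat, hm, hit.symm, Finsupp.erase_ne]
      by_cases hai : a = i
      · simp [hai, h1, hit]
      · simp [hai, hat]
    · refine hG _ i hi ?_
      simp only [Finsupp.tsub_apply, Finsupp.single_eq_same]
      omega
  | succ m ih =>
    have e1 : (ν - Finsupp.single i 1 : σ →₀ ℕ) t ≠ 0 := by simp [hit.symm, hm]
    have e2 : (ν - Finsupp.single t 1 : σ →₀ ℕ) i ≠ 0 := by
      simp only [Finsupp.tsub_apply, Finsupp.single_eq_of_ne hit]
      omega
    have e3 : (ν - Finsupp.single i 1 - Finsupp.single t 1 : σ →₀ ℕ) t = m := by simp [hit.symm, hm]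
    have e4 : (ν - Finsupp.single i 1 - Finsupp.single t 1 : σ →₀ ℕ) i = ν i - 1 := by simp [hit]
    rw [coeff_eq_of_one_sub_X_mul_X_mul_eq hit h, sub_mul, map_sub,
      coeff_X_mul_eq_ite, coeff_X_mul_eq_ite, hG _ _ ht e1, hG _ _ hi e2, ite_self, ite_self,
      sub_zero, zero_add,
      if_neg (by omega), ih _ (by omega) e3, e4]
    have e5 : ((ν - Finsupp.single i 1 - Finsupp.single t 1).erase i).erase t =
        (ν.erase i).erase t := by
      ext a
      by_cases hat : a = t
      · simp [hat]
      by_cases hai : a = i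
      · simp [hai, hit]
      · simp [hai, hat]
    rw [e5]
    exact if_congr (by omega) rfl rfl

end Support

section Coefficients

open MvPowerSeries

variable {n : ℕ}

theorem coeff_neg_one_pow_mul {σ : Type*} (ν : σ →₀ ℕ) (k : ℕ) (f : MvPowerSeries σ ℚ) :
    coeff ν ((-1) ^ k * f) = (-1) ^ k * coeff ν f := by
  have : ((-1) ^ k : MvPowerSeries σ ℚ) = C ((-1) ^ k) := by simp
  rw [this, coeff_C_mul]

/-- The first `k` entries of `ν` split into consecutive pairs `(m + 1, m)`, followed by a single
`0` if `k` is odd. -/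
def IsPaired (k : ℕ) (ν : Fin n → ℕ) : Prop :=
  ∀ i : Fin n, Even (i : ℕ) → (i : ℕ) < k →
    ((i : ℕ) + 1 = k ∧ ν i = 0) ∨ ∃ j : Fin n, (j : ℕ) = i + 1 ∧ (j : ℕ) < k ∧ ν i = ν j + 1

theorem isPaired_succ_iff {m : ℕ} (hm : Even m) (hmn : m < n) (ν : Fin n → ℕ) :
    IsPaired (m + 1) ν ↔ ν ⟨m, hmn⟩ = 0 ∧ IsPaired m ν := by
  constructor
  · intro h
    refine ⟨?_, fun i hi him => ?_⟩
    · obtain h | ⟨j, hj, hj', -⟩ := h ⟨m, hmn⟩ hm (Nat.lt_succ_self m)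
      · exact h.2
      · simp only at hj; omega
    · obtain h | ⟨j, hj, hj', h⟩ := h i hi (by omega)
      · omega
      · refine .inr ⟨j, hj, ?_, h⟩
        obtain ⟨a, ha⟩ := hi
        obtain ⟨b, hb⟩ := hm
        omega
  · rintro ⟨h0, h⟩ i hi him
    rcases Nat.lt_succ_iff_lt_or_eq.1 him with him | rfl
    · obtain h | ⟨j, hj, hj', h⟩ := h i hi him
      · obtain ⟨a, ha⟩ := hi
        obtain ⟨b, hb⟩ := hm
        omega
      · exact .inr ⟨j, hj, by omega, h⟩
    · exact .inl ⟨rfl, h0⟩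

theorem isPaired_add_two_iff {m : ℕ} (hm : Even m) (hmn : m + 1 < n) (ν : Fin n → ℕ) :
    IsPaired (m + 2) ν ↔ ν ⟨m, by omega⟩ = ν ⟨m + 1, hmn⟩ + 1 ∧ IsPaired m ν := by
  obtain ⟨b, hb⟩ := hm
  constructor
  · intro h
    refine ⟨?_, fun i hi him => ?_⟩
    · obtain h | ⟨j, hj, hj', h⟩ := h ⟨m, by omega⟩ ⟨b, hb⟩ (by simp)
      · simp at h
      · rwa [Fin.ext (a := j) (b := ⟨m + 1, hmn⟩) hj] at h
    · obtain h | ⟨j, hj, hj', h⟩ := h i hi (by omega)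
      · omega
      · refine .inr ⟨j, hj, ?_, h⟩
        obtain ⟨a, ha⟩ := hi
        omega
  · rintro ⟨h0, h⟩ i hi him
    obtain ⟨a, ha⟩ := id hi
    rcases lt_trichotomy (i : ℕ) m with him' | him' | him'
    · obtain h | ⟨j, hj, hj', h⟩ := h i hi him'
      · omega
      · exact .inr ⟨j, hj, by omega, h⟩
    · refine .inr ⟨⟨m + 1, hmn⟩, by simp [him'], by simp, ?_⟩
      rwa [Fin.ext (a := i) (b := ⟨m, by omega⟩) him']
    · omega

theorem IsPaired.congr {k : ℕ} {ν ν' : Fin n → ℕ} (h : ∀ i : Fin n, (i : ℕ) < k → ν i = ν' i) :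
    IsPaired k ν ↔ IsPaired k ν' := by
  refine forall_congr' fun i => forall_congr' fun _ => forall_congr' fun hi => ?_
  rw [h i hi]
  refine or_congr Iff.rfl (exists_congr fun j => and_congr_right fun _ => and_congr_right fun hj => ?_)
  rw [h j hj]

open Classical in
theorem coeff_pairProd_schurEntry (k : ℕ) (hk : k ≤ n) (ν : Fin n →₀ ℕ)
    (hν : ∀ i j : Fin n, i < j → (j : ℕ) < k → ν j < ν i)
    (hν0 : ∀ i : Fin n, k ≤ (i : ℕ) → ν i = 0) :
    coeff ν (pairProd schurEntry (Finset.univ.filter fun i : Fin n => (i : ℕ) < k)) =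
      if IsPaired k ν then 1 else 0 := by
  induction k using Nat.strong_induction_on generalizing ν with
  | _ k ih =>
  rcases Nat.even_or_odd' k with ⟨m, rfl | rfl⟩
  · rcases m with _ | m
    · have : ν = 0 := Finsupp.ext fun i => hν0 i (by omega)
      have hp : IsPaired (2 * 0) ν := fun i _ hi => absurd hi (by omega)
      rw [if_pos hp]
      simp [pairProd, this]
    · have hm : Even (2 * m) := even_two_mul m
      have hT : Odd (Finset.univ.filter fun i : Fin n => (i : ℕ) < 2 * m + 1).card := by
        rw [Fin.card_filter_val_lt, min_eq_right (by omega)]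
        exact hm.add_one
      set t : Fin n := ⟨2 * m + 1, by omega⟩ with ht
      set u : Fin n := ⟨2 * m, by omega⟩ with hu
      have e1 : (Finset.univ.filter fun i : Fin n => (i : ℕ) < 2 * (m + 1)) =
          insert t (Finset.univ.filter fun i : Fin n => (i : ℕ) < 2 * m + 1) := by
        ext i; simp [ht, Fin.ext_iff]; omega
      have e2 : (Finset.univ.filter fun i : Fin n => (i : ℕ) < 2 * m + 1).erase u =
          Finset.univ.filter fun i : Fin n => (i : ℕ) < 2 * m := by
        ext i; simp [hu, Fin.ext_iff]; omega
      have e3 : (Finset.univ.filter fun i : Fin n => (i : ℕ) < 2 * m + 1).filter (u < ·) = ∅ := by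
        ext i; simp [hu, Fin.lt_def]
      have hut : u < t := by simp [ht, hu, Fin.lt_def]
      have htk : (t : ℕ) < 2 * (m + 1) := by simp only [ht]; omega
      have hiff : IsPaired (2 * m) ((ν.erase u).erase t : Fin n →₀ ℕ) ↔ IsPaired (2 * m) ν := by
        refine IsPaired.congr fun i hi => ?_
        rw [Finsupp.erase_ne (by rintro rfl; simp [ht] at hi),
          Finsupp.erase_ne (by rintro rfl; simp [hu] at hi)]
      rw [e1, pairProd_schurEntry_even hT (fun a ha => by simpa [Fin.lt_def, ht] using ha), map_sum,
        Finset.sum_eq_single u]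
      · rw [e2, e3, Finset.card_empty, pow_zero, one_mul,
          coeff_schurEntry_mul (by simp [hu]) (by simp [ht]) hut.ne
            (involvesOnly_pairProd_schurEntry _) _ (hν u t hut htk), ih _ (by omega) (by omega),
          show 2 * (m + 1) = 2 * m + 2 by ring,
          if_congr (isPaired_add_two_iff hm (by omega) ν) rfl rfl, if_congr hiff rfl rfl, ite_and]
        · intro i j hij hj
          have hi : (i : ℕ) < 2 * m := by rw [Fin.lt_def] at hij; omega
          have : ∀ l : Fin n, (l : ℕ) < 2 * m → (ν.erase u).erase t l = ν l := fun l hl => by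
            rw [Finsupp.erase_ne (by rintro rfl; simp [ht] at hl),
              Finsupp.erase_ne (by rintro rfl; simp [hu] at hl)]
          rw [this i hi, this j hj]
          exact hν i j hij (by omega)
        · intro i hi
          by_cases hit : i = t
          · rw [hit, Finsupp.erase_same]
          by_cases hiu : i = u
          · rw [hiu, Finsupp.erase_ne hut.ne, Finsupp.erase_same]
          · rw [Finsupp.erase_ne hit, Finsupp.erase_ne hiu]
            refine hν0 i ?_
            rw [ht, Fin.ext_iff] at hit
            rw [hu, Fin.ext_iff] at hiu
            simp only at hit hiu
            omega
      · intro a ha hau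
        have hau' : a < u := by
          refine lt_of_le_of_ne ?_ hau
          rw [Finset.mem_filter] at ha
          rw [Fin.le_def]
          simp only [hu]
          omega
        have h1 := hν a u hau' (by simp only [hu]; omega)
        have h2 := hν u t hut htk
        rw [coeff_neg_one_pow_mul, coeff_schurEntry_mul (by simp)
          (by simp [ht]) (hau'.trans hut).ne (involvesOnly_pairProd_schurEntry _) _ (h2.trans h1),
          if_neg (by omega), mul_zero]
      · intro hu'
        simp [hu] at hu'
  · have hm : Even (2 * m) := even_two_mul m
    have hT : Odd (Finset.univ.filter fun i : Fin n => (i : ℕ) < 2 * m + 1).card := by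
      rw [Fin.card_filter_val_lt, min_eq_right (by omega)]
      exact hm.add_one
    set t : Fin n := ⟨2 * m, by omega⟩ with ht
    have e2 : (Finset.univ.filter fun i : Fin n => (i : ℕ) < 2 * m + 1).erase t =
        Finset.univ.filter fun i : Fin n => (i : ℕ) < 2 * m := by
      ext i; simp [ht, Fin.ext_iff]; omega
    have e3 : (Finset.univ.filter fun i : Fin n => (i : ℕ) < 2 * m + 1).filter (t < ·) = ∅ := by
      ext i; simp [ht, Fin.lt_def]
    rw [pairProd_schurEntry_odd hT, map_sum, Finset.sum_eq_single t]
    · rw [e2, e3, Finset.card_empty, pow_zero, one_mul,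
        if_congr (isPaired_succ_iff hm (by omega) ν) rfl rfl]
      by_cases h0 : ν t = 0
      · rw [ih _ (by omega) (by omega)]
        · exact if_congr (by simp [h0, ← ht]) rfl rfl
        · exact fun i j hij hj => hν i j hij (by omega)
        · intro i hi
          by_cases hit : i = t
          · rw [hit, h0]
          · refine hν0 i ?_
            rw [ht, Fin.ext_iff] at hit
            simp only at hit
            omega
      · rw [if_neg fun h => h0 h.1]
        exact involvesOnly_pairProd_schurEntry _ ν t (by simp [ht]) h0
    · intro a ha hat
      have hat' : a < t := by
        refine lt_of_le_of_ne ?_ hat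
        rw [Finset.mem_filter] at ha
        rw [Fin.le_def]
        simp only [ht]
        omega
      have h1 := hν a t hat' (by simp [ht])
      rw [coeff_neg_one_pow_mul, involvesOnly_pairProd_schurEntry _ ν a (by simp) (by omega),
        mul_zero]
    · intro ht'
      simp [ht] at ht'

end Coefficients

section Alternating

open MvPowerSeries

variable {n : ℕ}

/-- Permuting the variables multiplies `f` by the sign of the permutation. -/
def IsAlternating (f : MvPowerSeries (Fin n) ℚ) : Prop :=
  ∀ e : Equiv.Perm (Fin n), rename e f = (Equiv.Perm.sign e : ℤ) • f

theorem IsAlternating.coeff_embDomain {f : MvPowerSeries (Fin n) ℚ} (hf : IsAlternating f)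
    (e : Equiv.Perm (Fin n)) (ν : Fin n →₀ ℕ) :
    coeff ν f = (Equiv.Perm.sign e : ℤ) • coeff (ν.embDomain e.toEmbedding) f := by
  rw [← coeff_embDomain_rename e.toEmbedding f ν]
  exact (congrArg _ (hf e)).trans (map_zsmul _ _ _)

theorem IsAlternating.coeff_eq_zero {f : MvPowerSeries (Fin n) ℚ} (hf : IsAlternating f)
    {ν : Fin n →₀ ℕ} {a b : Fin n} (hab : a ≠ b) (h : ν a = ν b) : coeff ν f = 0 := by
  have h1 := hf.coeff_embDomain (Equiv.swap a b) ν
  have h2 : ν.embDomain (Equiv.swap a b).toEmbedding = ν := by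
    ext i
    obtain ⟨i, rfl⟩ := (Equiv.swap a b).surjective i
    refine (Finsupp.embDomain_apply_self (Equiv.swap a b).toEmbedding ν i).trans ?_
    rcases eq_or_ne i a with rfl | hia
    · rw [Equiv.swap_apply_left, h]
    rcases eq_or_ne i b with rfl | hib
    · rw [Equiv.swap_apply_right, h]
    · rw [Equiv.swap_apply_of_ne_of_ne hia hib]
  rw [h2, Equiv.Perm.sign_swap hab] at h1
  simp only [Units.val_neg, Units.val_one, neg_smul, one_smul] at h1
  linarith

theorem isAlternating_det (m : Fin n → ℕ) :
    IsAlternating (Matrix.det (Matrix.of fun i j : Fin n =>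
      (X i : MvPowerSeries (Fin n) ℚ) ^ m j)) := by
  intro e
  have h := Matrix.det_permute e (Matrix.of fun i j : Fin n =>
    (X i : MvPowerSeries (Fin n) ℚ) ^ m j)
  rw [zsmul_eq_mul, ← h, AlgHom.map_det]
  congr 1
  ext1 i j
  simp

theorem rename_schurEntry (e : Equiv.Perm (Fin n)) (i j : Fin n) :
    rename e (schurEntry i j) = schurEntry (e i) (e j) := by
  have h := congrArg (rename (R := ℚ) e) (one_sub_X_mul_X_mul_schurEntry i j)
  simp only [map_mul, map_sub, map_one, rename_X] at h
  exact mul_left_cancel₀ (one_sub_X_mul_X_ne_zero (e i) (e j))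
    (h.trans (one_sub_X_mul_X_mul_schurEntry _ _).symm)

theorem pairProd_univ {R : Type*} [CommRing R] (f : Fin n → Fin n → R) :
    pairProd f Finset.univ = ∏ i, ∏ j ∈ Finset.Ioi i, f i j := by
  simp only [pairProd, Finset.filter_lt_eq_Ioi]

theorem isAlternating_pairProd_schurEntry :
    IsAlternating (pairProd schurEntry (Finset.univ : Finset (Fin n))) := by
  intro e
  rw [pairProd_univ, zsmul_eq_mul, ← e.prod_Ioi_comp_eq_sign_mul_prod schurEntry_antisymm]
  simp only [map_prod, rename_schurEntry]

theorem eq_one_of_strictAnti_comp {m ν : Fin n → ℕ} (hm : StrictAnti m) (hν : StrictAnti ν)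
    (e : Equiv.Perm (Fin n)) (h : ∀ i, ν (e i) = m i) : e = 1 := by
  have he : StrictMono e := fun i j hij => hν.lt_iff_gt.1 (by rw [h, h]; exact hm hij)
  exact Equiv.ext fun i => congrFun
    ((he.range_inj strictMono_id).1 (by simp [e.surjective.range_eq])) i

theorem coeff_det_of_strictAnti {m : Fin n → ℕ} (hm : StrictAnti m) {ν : Fin n →₀ ℕ}
    (hν : StrictAnti ν) :
    coeff ν (Matrix.det (Matrix.of fun i j : Fin n =>
      (X i : MvPowerSeries (Fin n) ℚ) ^ m j)) = if ⇑ν = m then 1 else 0 := by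
  have hmon : ∀ e : Equiv.Perm (Fin n), ∏ i, (X (e i) : MvPowerSeries (Fin n) ℚ) ^ m i =
      monomial (∑ i, Finsupp.single (e i) (m i)) 1 := fun e => by
    simp only [X_pow_eq, prod_monomial, Finset.prod_const_one]
  have hval : ∀ e : Equiv.Perm (Fin n), ∀ i, (∑ i, Finsupp.single (e i) (m i)) (e i) = m i :=
    fun e i => by
      rw [Finsupp.finsetSum_apply, Finset.sum_eq_single i (fun j _ hji =>
        Finsupp.single_eq_of_ne (e.injective.ne hji.symm)) (by simp), Finsupp.single_eq_same]
  simp only [Matrix.det_apply, Matrix.of_apply, hmon, map_sum]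
  rw [Finset.sum_eq_single 1]
  · rw [Equiv.Perm.sign_one, one_smul, coeff_monomial]
    refine if_congr ⟨?_, fun h => Finsupp.ext fun i => ?_⟩ rfl rfl
    · rintro rfl
      exact funext (hval 1)
    · rw [h]
      exact (hval 1 i).symm
  · intro e _ he
    have h0 : coeff ν (monomial (∑ i, Finsupp.single (e i) (m i)) (1 : ℚ)) = 0 :=
      coeff_monomial_ne (fun h => he (eq_one_of_strictAnti_comp hm hν e fun i => by
        rw [h, hval])) _
    rw [Units.smul_def, map_zsmul, h0, smul_zero]
  · simp

end Alternating

section Partitions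

variable {n : ℕ}

theorem isPaired_of_even_card {l : Fin n → ℕ} (hl : Antitone l)
    (h : ∀ c : ℕ, 1 ≤ c → Even (Finset.univ.filter fun i : Fin n => c ≤ l i).card) :
    IsPaired n fun i => l i + (n - 1 - (i : ℕ)) := by
  intro i hi _
  have key : ∀ c, 1 ≤ c → c ≤ l i → ∃ j, i < j ∧ c ≤ l j := by
    intro c hc hci
    by_contra! hj
    have h1 : (Finset.univ.filter fun j : Fin n => c ≤ l j) = Finset.Iic i := by
      ext j
      simp only [Finset.mem_filter, Finset.mem_univ, true_and, Finset.mem_Iic]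
      exact ⟨fun hcj => not_lt.1 fun hij => (hj j hij).not_ge hcj, fun hji => hci.trans (hl hji)⟩
    have h2 := h c hc
    rw [h1, Fin.card_Iic] at h2
    exact (Nat.not_even_iff_odd.2 hi.add_one) h2
  have hin := i.isLt
  by_cases hn : (i : ℕ) + 1 = n
  · refine .inl ⟨hn, ?_⟩
    rcases Nat.eq_zero_or_pos (l i) with h0 | h0
    · simp only [h0]; omega
    · obtain ⟨j, hij, -⟩ := key _ h0 le_rfl
      rw [Fin.lt_def] at hij
      omega
  · refine .inr ⟨⟨i + 1, by omega⟩, rfl, by simp only; omega, ?_⟩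
    have h1 : l ⟨i + 1, by omega⟩ ≤ l i := hl (by simp [Fin.le_def])
    have h2 : l i ≤ l ⟨i + 1, by omega⟩ := by
      rcases Nat.eq_zero_or_pos (l i) with h0 | h0
      · omega
      · obtain ⟨j, hij, hj⟩ := key _ h0 le_rfl
        exact hj.trans (hl (by rw [Fin.lt_def] at hij; rw [Fin.le_def]; simp only; omega))
    simp only
    omega

theorem even_card_of_isPaired {l : Fin n → ℕ} (hl : Antitone l)
    (h : IsPaired n fun i => l i + (n - 1 - (i : ℕ))) (c : ℕ) (hc : 1 ≤ c) :
    Even (Finset.univ.filter fun i : Fin n => c ≤ l i).card := by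
  set s := Finset.univ.filter fun i : Fin n => c ≤ l i with hs
  rcases s.eq_empty_or_nonempty with h0 | h0
  · simp [h0]
  set i := s.max' h0 with hi
  have hci : c ≤ l i := (Finset.mem_filter.1 (s.max'_mem h0)).2
  have h1 : s = Finset.Iic i := by
    ext j
    rw [Finset.mem_Iic]
    exact ⟨fun hj => s.le_max' j hj, fun hj => Finset.mem_filter.2 ⟨Finset.mem_univ j,
      hci.trans (hl hj)⟩⟩
  rw [h1, Fin.card_Iic]
  by_contra hodd
  rcases h i (by simpa [Nat.even_add_one] using hodd) i.isLt with ⟨hn, h2⟩ | ⟨j, hj, -, h2⟩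
  · have h2' : l i + (n - 1 - i) = 0 := h2
    omega
  · have h2' : l i + (n - 1 - i) = l j + (n - 1 - j) + 1 := h2
    have := j.isLt
    have h3 : j ∈ s := Finset.mem_filter.2 ⟨Finset.mem_univ j, by omega⟩
    have h4 := s.le_max' j h3
    rw [← hi, Fin.le_def] at h4
    omega

theorem Antitone.strictAnti_add_staircase {l : Fin n → ℕ} (hl : Antitone l) :
    StrictAnti fun i : Fin n => l i + (n - 1 - (i : ℕ)) := fun i j hij => by
  have := hl hij.le
  have := j.isLt
  rw [Fin.lt_def] at hij
  simp only
  omega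

theorem StrictAnti.exists_antitone_add_staircase {ν : Fin n → ℕ} (hν : StrictAnti ν) :
    ∃ l : Fin n → ℕ, Antitone l ∧ ν = fun i => l i + (n - 1 - (i : ℕ)) := by
  have key : ∀ (k : ℕ) (i j : Fin n), (j : ℕ) = i + k → ν j + k ≤ ν i := by
    intro k
    induction k with
    | zero => intro i j h; rw [Fin.ext (a := j) (b := i) (by simpa using h)]; simp
    | succ k ih =>
      intro i j h
      have hj := j.isLt
      have h1 := ih i ⟨i + k, by omega⟩ rfl
      have h2 : ν j < ν ⟨i + k, by omega⟩ := hν (by rw [Fin.lt_def]; simp only; omega)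
      omega
  refine ⟨fun i => ν i - (n - 1 - (i : ℕ)), fun i j hij => ?_, funext fun i => ?_⟩
  · have := key (j - i) i j (by rw [Fin.le_def] at hij; omega)
    have := j.isLt
    rw [Fin.le_def] at hij
    simp only
    omega
  · have := i.isLt
    have := key (n - 1 - i) i ⟨n - 1, by omega⟩ (by simp only; omega)
    simp only
    omega

end Partitions

section Littlewood

open MvPowerSeries

variable {n : ℕ}

theorem exists_perm_strictAnti_comp {ν : Fin n → ℕ} (hν : Function.Injective ν) :
    ∃ e : Equiv.Perm (Fin n), StrictAnti (ν ∘ e) := by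
  refine ⟨Tuple.sort (OrderDual.toDual ∘ ν), ?_⟩
  exact (Tuple.monotone_sort (OrderDual.toDual ∘ ν)).dual_right.strictAnti_of_injective
    (hν.comp (Equiv.injective _))

/-- Littlewood's sum, coefficientwise: the bialternant numerators of the partitions with even
conjugate sum to Schur's Pfaffian product. -/
theorem hasSum_coeff_det [TopologicalSpace ℚ] (ν : Fin n →₀ ℕ) :
    HasSum
      (fun l : {l : Fin n → ℕ //
          (∀ i j : Fin n, i ≤ j → l j ≤ l i) ∧
            ∀ c : ℕ, 1 ≤ c →
              Even (Finset.univ.filter (fun i : Fin n => c ≤ l i)).card} =>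
        coeff ν (Matrix.det (Matrix.of fun i j : Fin n =>
            (X i : MvPowerSeries (Fin n) ℚ) ^ (l.1 j + (n - 1 - (j : ℕ))))))
      (coeff ν (pairProd schurEntry Finset.univ)) := by
  classical
  by_cases hinj : Function.Injective ν
  · obtain ⟨e, he⟩ := exists_perm_strictAnti_comp hinj
    set μ := ν.embDomain e.symm.toEmbedding with hμ
    have hμe : ⇑μ = ν ∘ e := funext fun i => by
      simpa using Finsupp.embDomain_apply_self e.symm.toEmbedding ν (e i)
    rw [← hμe] at he
    have hG : coeff μ (pairProd schurEntry (Finset.univ : Finset (Fin n))) =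
        if IsPaired n μ then 1 else 0 := by
      simpa using coeff_pairProd_schurEntry n le_rfl μ (fun i j hij _ => he hij)
        (fun i hi => absurd i.isLt (by omega))
    simp only [(isAlternating_det _).coeff_embDomain e.symm ν,
      isAlternating_pairProd_schurEntry.coeff_embDomain e.symm ν, ← hμ, hG]
    obtain ⟨l, hl, hlμ⟩ := he.exists_antitone_add_staircase
    by_cases hp : IsPaired n μ
    · have hev := even_card_of_isPaired hl (hlμ ▸ hp)
      convert hasSum_single (⟨l, fun i j hij => hl hij, hev⟩ : {l : Fin n → ℕ //
          (∀ i j : Fin n, i ≤ j → l j ≤ l i) ∧ ∀ c : ℕ, 1 ≤ c →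
            Even (Finset.univ.filter (fun i : Fin n => c ≤ l i)).card}) ?_ using 1
      · rw [coeff_det_of_strictAnti hl.strictAnti_add_staircase he, if_pos hp, if_pos hlμ]
      · intro l' hl'
        rw [coeff_det_of_strictAnti (Antitone.strictAnti_add_staircase l'.2.1) he, if_neg,
          smul_zero]
        intro h
        refine hl' (Subtype.ext (funext fun i => ?_))
        exact (Nat.add_right_cancel (congrFun (hlμ.symm.trans h) i)).symm
    · rw [if_neg hp, smul_zero]
      convert hasSum_zero with l'
      rw [coeff_det_of_strictAnti (Antitone.strictAnti_add_staircase l'.2.1) he, if_neg,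
        smul_zero]
      intro h
      exact hp (h ▸ isPaired_of_even_card l'.2.1 l'.2.2)
  · rw [Function.Injective] at hinj
    push Not at hinj
    obtain ⟨a, b, h, hab⟩ := hinj
    simp only [(isAlternating_det _).coeff_eq_zero hab h,
      isAlternating_pairProd_schurEntry.coeff_eq_zero hab h]
    exact hasSum_zero

theorem pairProd_schurEntry_mul_prod_one_sub :
    pairProd schurEntry (Finset.univ : Finset (Fin n)) *
        ∏ i : Fin n, ∏ j ∈ Finset.Ioi i, (1 - X i * X j) =
      ∏ i : Fin n, ∏ j ∈ Finset.Ioi i, (X i - X j) := by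
  simp only [pairProd_univ, ← Finset.prod_mul_distrib, mul_comm (schurEntry _ _),
    one_sub_X_mul_X_mul_schurEntry]

open scoped MvPowerSeries.WithPiTopology in
/-- Littlewood's formula for the product topology of any discrete topology on `ℚ`. -/
theorem hasSum_det_mul_prod_one_sub [TopologicalSpace ℚ] [DiscreteTopology ℚ] :
    HasSum
      (fun l : {l : Fin n → ℕ //
          (∀ i j : Fin n, i ≤ j → l j ≤ l i) ∧
            ∀ c : ℕ, 1 ≤ c →
              Even (Finset.univ.filter (fun i : Fin n => c ≤ l i)).card} =>
        Matrix.det (Matrix.of fun i j : Fin n =>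
            (X i : MvPowerSeries (Fin n) ℚ) ^ (l.1 j + (n - 1 - (j : ℕ)))) *
          ∏ i : Fin n, ∏ j ∈ Finset.Ioi i, (1 - X i * X j))
      (∏ i : Fin n, ∏ j ∈ Finset.Ioi i, (X i - X j)) := by
  rw [← pairProd_schurEntry_mul_prod_one_sub]
  exact (WithPiTopology.hasSum_iff_hasSum_coeff.2 hasSum_coeff_det).mul_right _

end Littlewood

/-- **Littlewood's formula** `∑_{λ' even} s_λ = ∏_{i<j} 1/(1-x_i x_j)` with denominators
cleared, as a convergent sum in `ℚ[[x_1,…,x_n]]` (with the product topology coming from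
the discrete topology on the coefficients).  Partitions with at most `n` parts whose
conjugate is even (i.e. `#{i : λ_i ≥ c}` is even for every `c ≥ 1`) are encoded as
antitone functions `Fin n → ℕ` with the corresponding parity condition; with 0-indexed
`j`, the exponent `λ_j + n - j` becomes `l j + (n - 1 - j)`. -/
theorem littlewood_sum_conjugate_even_partitions (n : ℕ) (hn : 0 < n) :
    letI : TopologicalSpace ℚ := ⊥
    letI : TopologicalSpace (MvPowerSeries (Fin n) ℚ) :=
      inferInstanceAs (TopologicalSpace ((Fin n →₀ ℕ) → ℚ))
    HasSum
      (fun l : {l : Fin n → ℕ //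
          (∀ i j : Fin n, i ≤ j → l j ≤ l i) ∧
            ∀ c : ℕ, 1 ≤ c →
              Even (Finset.univ.filter (fun i : Fin n => c ≤ l i)).card} =>
        Matrix.det (Matrix.of fun i j : Fin n =>
            (MvPowerSeries.X i : MvPowerSeries (Fin n) ℚ) ^ (l.1 j + (n - 1 - (j : ℕ)))) *
          ∏ i : Fin n, ∏ j ∈ Finset.Ioi i,
            (1 - MvPowerSeries.X i * MvPowerSeries.X j))
      (∏ i : Fin n, ∏ j ∈ Finset.Ioi i,
        (MvPowerSeries.X i - MvPowerSeries.X j)) := by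
  exact @hasSum_det_mul_prod_one_sub n ⊥ (@DiscreteTopology.mk ℚ ⊥ rfl)
end

section
/- For all positive integers m and n, the generating function for symmetric plane partitions P contained in the box B(n,n,m) is given by: ∑_P q^{|P|} = ∏_{i=1}^n (1 − q^{m+2i−1})/(1 − q^{2i−1}) · ∏_{1 ≤ i < j ≤ n} (1 − q^{2(m+i+j−1)})/(1 − q^{2(i+j−1)}), as an identity in the formal power series ring ℚ[[q]], where each (1 − q^a)^{−1} denotes the inverse of the unit 1 − q^a. (MacMahon's conjecture.) -/
open scoped Classical

/-- A plane partition: a finite set of lattice points with positive integer coordinates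
that is downward closed. -/
def IsPlanePartition (P : Finset (ℕ × ℕ × ℕ)) : Prop :=
  (∀ p ∈ P, 1 ≤ p.1 ∧ 1 ≤ p.2.1 ∧ 1 ≤ p.2.2) ∧
    ∀ p ∈ P, ∀ i j k : ℕ,
      1 ≤ i → i ≤ p.1 → 1 ≤ j → j ≤ p.2.1 → 1 ≤ k → k ≤ p.2.2 → (i, j, k) ∈ P

/-- A plane partition is symmetric if it is invariant under transposing the first two
coordinates. -/
def IsSymmetricPP (P : Finset (ℕ × ℕ × ℕ)) : Prop :=
  ∀ i j k : ℕ, (i, j, k) ∈ P ↔ (j, i, k) ∈ P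

/-- The box `B(n₁,n₂,m) = {(i,j,k) : 1 ≤ i ≤ n₁, 1 ≤ j ≤ n₂, 1 ≤ k ≤ m}` as a finset. -/
def ppBox (n₁ n₂ m : ℕ) : Finset (ℕ × ℕ × ℕ) :=
  Finset.Icc 1 n₁ ×ˢ Finset.Icc 1 n₂ ×ˢ Finset.Icc 1 m

/-- The denominator `∏ i (1 - t i) * ∏_{i < j} (1 - t i * t j)`. -/
def littlewoodDenom {R : Type*} [CommRing R] {n : ℕ} (t : Fin n → R) : R :=
  (∏ i, (1 - t i)) * ∏ i, ∏ j, if i < j then 1 - t i * t j else 1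

lemma littlewoodDenom_succAbove {R : Type*} [CommRing R] {k : ℕ} (t : Fin (k + 1) → R)
    (j : Fin (k + 1)) :
    littlewoodDenom t = littlewoodDenom (fun i => t (j.succAbove i)) *
      ((1 - t j) * ∏ i, (1 - t (j.succAbove i) * t j)) := by
  have key : ∀ i : Fin k, (if j < j.succAbove i then 1 - t j * t (j.succAbove i) else 1) *
      (if j.succAbove i < j then 1 - t (j.succAbove i) * t j else 1) =
      1 - t (j.succAbove i) * t j := by
    intro i
    rcases lt_or_gt_of_ne (Fin.succAbove_ne j i) with h | h
    · rw [if_neg h.not_gt, if_pos h, one_mul]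
    · rw [if_neg h.not_gt, if_pos h, mul_one, mul_comm]
  unfold littlewoodDenom
  have hrow : ∀ i : Fin k, (∏ l, if j.succAbove i < l then 1 - t (j.succAbove i) * t l else 1) =
      (if j.succAbove i < j then 1 - t (j.succAbove i) * t j else 1) *
        ∏ l : Fin k, if i < l then 1 - t (j.succAbove i) * t (j.succAbove l) else 1 := by
    intro i
    rw [Fin.prod_univ_succAbove _ j]
    simp only [Fin.succAbove_lt_succAbove_iff]
  rw [Fin.prod_univ_succAbove _ j, Fin.prod_univ_succAbove _ j,
    Fin.prod_univ_succAbove (fun l => if j < l then 1 - t j * t l else 1) j,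
    if_neg (lt_irrefl j), one_mul]
  simp only [hrow, Finset.prod_mul_distrib]
  rw [← Finset.prod_congr rfl fun i _ => key i, Finset.prod_mul_distrib]
  ring

lemma det_of_cons {R : Type*} [CommRing R] {k : ℕ} (v : Fin (k + 1) → R)
    (w : Fin k → Fin (k + 1) → R) :
    (Matrix.of (Fin.cons v w : Fin (k + 1) → Fin (k + 1) → R)).det =
      ∑ j : Fin (k + 1), (-1) ^ (j : ℕ) * v j *
        (Matrix.of fun i l => w i (j.succAbove l)).det := by
  rw [Matrix.det_succ_row_zero]
  rfl

lemma prod_one_sub_mul_eq_sum {R : Type*} [CommRing R] {n : ℕ} (t : Fin n → R) (z : R) {L : ℕ}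
    (hL : n ≤ L) (hz : ∏ i, (z - t i) = 0) :
    ∏ i, (1 - t i * z) = ∑ S : Finset (Fin n), (-1) ^ S.card * (∏ i ∈ S, t i) *
      (z ^ S.card - z ^ (L - S.card)) := by
  have h1 : ∏ i, (1 - t i * z) =
      ∑ S : Finset (Fin n), (-1) ^ S.card * (∏ i ∈ S, t i) * z ^ S.card := by
    have := Finset.prod_add (fun i => -(t i * z)) (fun _ : Fin n => (1 : R)) Finset.univ
    simp only [Finset.prod_const_one, mul_one, Finset.powerset_univ] at this
    rw [show (∏ i, (1 - t i * z)) = ∏ i, (-(t i * z) + 1) from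
      Finset.prod_congr rfl fun i _ => by ring, this]
    refine Finset.sum_congr rfl fun S _ => ?_
    rw [Finset.prod_neg, Finset.prod_mul_distrib, Finset.prod_const]
    ring
  have h2 : ∏ i, (z - t i) =
      ∑ S : Finset (Fin n), (-1) ^ S.card * (∏ i ∈ S, t i) * z ^ (n - S.card) := by
    have := Finset.prod_add (fun i => -(t i)) (fun _ : Fin n => z) Finset.univ
    simp only [Finset.prod_const, Finset.powerset_univ] at this
    rw [show (∏ i, (z - t i)) = ∏ i, (-(t i) + z) from
      Finset.prod_congr rfl fun i _ => by ring, this]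
    refine Finset.sum_congr rfl fun S _ => ?_
    rw [Finset.prod_neg, ← Finset.compl_eq_univ_sdiff, Finset.card_compl, Fintype.card_fin]
  have h3 : ∑ S : Finset (Fin n), (-1) ^ S.card * (∏ i ∈ S, t i) * z ^ (L - S.card) = 0 := by
    calc _ = z ^ (L - n) * ∏ i, (z - t i) := by
          rw [h2, Finset.mul_sum]
          refine Finset.sum_congr rfl fun S _ => ?_
          have : S.card ≤ n := by simpa using S.card_le_univ
          rw [show L - S.card = (L - n) + (n - S.card) by omega, pow_add]
          ring
      _ = 0 := by rw [hz, mul_zero]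
  simp only [mul_sub, Finset.sum_sub_distrib, h3, sub_zero, h1]

/-- Replacing the first row `1 - t ^ L` of an alternant of type `B` by the row of factors
`(1 - t j) * ∏_{i ≠ j} (1 - t i * t j)`. -/
lemma det_alternant_sub {R : Type*} [CommRing R] [IsDomain R] {k L : ℕ} (t : Fin (k + 1) → R)
    (ht : ∀ j, 1 + t j ≠ 0) (hL : 2 * k + 2 ≤ L) :
    (Matrix.of fun i j : Fin (k + 1) => t j ^ (i : ℕ) - t j ^ (L - 1 - i)).det =
      (Matrix.of fun i j : Fin (k + 1) => t j ^ ((i : ℕ) + 1) - t j ^ (L - 1 - i)).det +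
      ∑ j : Fin (k + 1), (-1) ^ (j : ℕ) *
        ((1 - t j) * ∏ i, (1 - t (j.succAbove i) * t j)) *
        (Matrix.of fun i l : Fin k => t (j.succAbove l) ^ ((i : ℕ) + 1) -
          t (j.succAbove l) ^ (L - 2 - i)).det := by
  set A : ℕ → Fin (k + 1) → R := fun i j => t j ^ i - t j ^ (L - 1 - i) with hA
  set B : ℕ → Fin (k + 1) → R := fun i j => t j ^ i - t j ^ (L - i) with hB
  set r : Fin (k + 1) → R := fun j => (1 - t j) * ∏ i, (1 - t (j.succAbove i) * t j) with hr
  have hprod : ∏ j, (1 + t j) ≠ 0 := Finset.prod_ne_zero_iff.2 fun j _ => ht j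
  have hAB : ∀ i, i ≤ k → ∀ j, (1 + t j) * A i j = B i j + B (i + 1) j := by
    intro i hi j
    simp only [hA, hB]
    rw [show L - i = (L - 1 - i) + 1 by omega, show L - (i + 1) = L - 1 - i by omega]
    ring
  let φ : (Fin (k + 1) → R) →ₗ[R] R :=
    ∑ j : Fin (k + 1), ((-1) ^ (j : ℕ) *
      (Matrix.of fun i l : Fin k => (B (i + 1) + B (i + 2)) (j.succAbove l)).det) •
      LinearMap.proj j
  have hφ : ∀ v, φ v = (Matrix.of (Fin.cons v (fun i : Fin k => B (i + 1) + B (i + 2)) :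
      Fin (k + 1) → Fin (k + 1) → R)).det := by
    intro v
    rw [det_of_cons]
    simp only [φ, LinearMap.sum_apply, LinearMap.smul_apply, LinearMap.proj_apply, smul_eq_mul]
    exact Finset.sum_congr rfl fun j _ => by ring
  have hscale : ∀ v : Fin (k + 1) → R, (∏ j, (1 + t j)) *
      (Matrix.of (Fin.cons v (fun i : Fin k => A (i + 1)) :
      Fin (k + 1) → Fin (k + 1) → R)).det = φ fun j => (1 + t j) * v j := by
    intro v
    rw [hφ, ← Matrix.det_mul_row]
    congr 1
    ext i j
    refine Fin.cases ?_ (fun i => ?_) i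
    · simp
    · simp [hAB (i + 1) (by omega) j]
  have hpair : ∀ i, i < k → φ (B (i + 1)) = - φ (B (i + 2)) := by
    intro i hi
    rw [eq_neg_iff_add_eq_zero, ← map_add, hφ]
    refine Matrix.det_zero_of_row_eq (i := 0) (j := Fin.succ ⟨i, hi⟩) (Fin.succ_ne_zero _).symm ?_
    ext j
    simp only [Matrix.of_apply, Fin.cons_zero, Fin.cons_succ]
  have hs : ∀ s, s ≤ k → φ (B (s + 1)) = (-1) ^ s * φ (B 1) := by
    intro s
    induction s with
    | zero => intro _; simp
    | succ s ih =>
      intro h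
      have := hpair s (by omega)
      rw [ih (by omega)] at this
      rw [pow_succ]
      linear_combination this
  have hφB : φ (B 1) =
      (Matrix.of fun i j : Fin (k + 1) => t j ^ ((i : ℕ) + 1) - t j ^ (L - 1 - i)).det := by
    rw [hφ]
    symm
    refine Matrix.det_eq_of_forall_row_eq_smul_add_pred (fun _ => -1) ?_ ?_
    · intro j
      simp [hB]
    · intro i j
      simp only [hB, Matrix.of_apply, Fin.cons_succ, Pi.add_apply, Fin.val_succ,
        Fin.val_castSucc]
      rw [show L - ((i : ℕ) + 1) = L - 1 - i by omega,
        show L - ((i : ℕ) + 2) = L - 1 - (i + 1) by omega]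
      ring
  have hφr : (φ fun j => (1 + t j) * r j) =
      φ (B 0) + φ (B 1) - (∏ j, (1 + t j)) * φ (B 1) := by
    have h1 : (fun j => (1 + t j) * r j) =
        ∑ S : Finset (Fin (k + 1)), ((-1) ^ S.card * (∏ i ∈ S, t i)) • B S.card := by
      ext j
      simp only [Finset.sum_apply, Pi.smul_apply, smul_eq_mul, hB]
      rw [← prod_one_sub_mul_eq_sum t (t j) (L := L) (by omega)
        (Finset.prod_eq_zero (Finset.mem_univ j) (sub_self _)), Fin.prod_univ_succAbove _ j]
      simp only [hr]
      ring
    have h2 : ∀ S : Finset (Fin (k + 1)), φ (B S.card) =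
        -((-1) ^ S.card * φ (B 1)) + if S = ∅ then φ (B 0) + φ (B 1) else 0 := by
      intro S
      by_cases hS : S = ∅
      · simp [hS]
      · have h3 : S.card ≤ k + 1 := by simpa using S.card_le_univ
        have h4 : S.card ≠ 0 := by simpa using hS
        obtain ⟨s, hs'⟩ := Nat.exists_eq_succ_of_ne_zero h4
        rw [if_neg hS, hs', hs s (by omega), pow_succ]
        ring
    have h5 : ∏ j, (1 + t j) = ∑ S : Finset (Fin (k + 1)), ∏ i ∈ S, t i := by
      rw [Finset.prod_one_add, Finset.powerset_univ]
    rw [h1, map_sum, h5, Finset.sum_mul]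
    simp only [map_smul, smul_eq_mul, h2, mul_add, Finset.sum_add_distrib, mul_ite, mul_zero,
      Finset.sum_ite_eq', Finset.mem_univ, if_true, Finset.card_empty, pow_zero,
      Finset.prod_empty, one_mul]
    rw [add_comm, sub_eq_add_neg, ← Finset.sum_neg_distrib]
    congr 1
    refine Finset.sum_congr rfl fun S _ => ?_
    have : ((-1 : R) ^ S.card) * (-1) ^ S.card = 1 := by
      rw [← mul_pow]; simp
    linear_combination (-(∏ i ∈ S, t i) * φ (B 1)) * this
  apply mul_left_cancel₀ hprod
  have e1 : (Matrix.of fun i j : Fin (k + 1) => t j ^ (i : ℕ) - t j ^ (L - 1 - i)) =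
      Matrix.of (Fin.cons (A 0) (fun i : Fin k => A (i + 1)) :
      Fin (k + 1) → Fin (k + 1) → R) := by
    ext i j
    refine Fin.cases ?_ (fun i => ?_) i <;> simp [hA]
  have e2 : ∑ j : Fin (k + 1), (-1) ^ (j : ℕ) * r j *
        (Matrix.of fun i l : Fin k => t (j.succAbove l) ^ ((i : ℕ) + 1) -
          t (j.succAbove l) ^ (L - 2 - i)).det =
      (Matrix.of (Fin.cons r (fun i : Fin k => A (i + 1)) :
      Fin (k + 1) → Fin (k + 1) → R)).det := by
    rw [det_of_cons]
    refine Finset.sum_congr rfl fun j _ => ?_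
    congr 3
    ext i l
    simp only [hA]
    rw [show L - 1 - ((i : ℕ) + 1) = L - 2 - i by omega]
  rw [e2, e1, mul_add, hscale, hscale, hφr, ← hφB]
  have : (fun j => (1 + t j) * A 0 j) = B 0 + B 1 := by
    ext j
    simpa using hAB 0 (by omega) j
  rw [this, map_add]
  ring

/-- The sum of the alternants `det (t j ^ (λ i + i))` over all weakly increasing sequences `λ`
with entries less than `b`. -/
noncomputable def alternantSum {R : Type*} [CommRing R] (n b : ℕ) (t : Fin n → R) : R :=
  ∑ l ∈ (Fintype.piFinset fun _ : Fin n => Finset.range b).filter Monotone,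
    (Matrix.of fun i j : Fin n => t j ^ (l i + (i : ℕ))).det

lemma alternantSum_succ {R : Type*} [CommRing R] (k b : ℕ) (t : Fin (k + 1) → R) :
    alternantSum (k + 1) (b + 1) t = (∏ j, t j) * alternantSum (k + 1) b t +
      ∑ j : Fin (k + 1), (-1) ^ (j : ℕ) * (∏ i, t (j.succAbove i)) *
        alternantSum k (b + 1) (fun i => t (j.succAbove i)) := by
  classical
  unfold alternantSum
  rw [← Finset.sum_filter_add_sum_filter_not _ (fun l : Fin (k + 1) → ℕ => 1 ≤ l 0)]
  congr 1
  · rw [Finset.mul_sum]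
    refine Finset.sum_nbij' (fun l i => l i - 1) (fun l i => l i + 1) ?_ ?_ ?_ ?_ ?_
    · intro l hl
      simp only [Finset.mem_filter, Fintype.mem_piFinset, Finset.mem_range] at hl ⊢
      obtain ⟨⟨h1, h2⟩, h3⟩ := hl
      refine ⟨fun i => ?_, fun i j hij => ?_⟩
      · have := h1 i
        have := h2 (Fin.zero_le i)
        omega
      · have := h2 hij
        dsimp only
        omega
    · intro l hl
      simp only [Finset.mem_filter, Fintype.mem_piFinset, Finset.mem_range] at hl ⊢
      obtain ⟨h1, h2⟩ := hl
      refine ⟨⟨fun i => ?_, fun i j hij => ?_⟩, ?_⟩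
      · have := h1 i
        omega
      · have := h2 hij
        dsimp only
        omega
      · omega
    · intro l hl
      simp only [Finset.mem_filter, Fintype.mem_piFinset, Finset.mem_range] at hl
      obtain ⟨⟨h1, h2⟩, h3⟩ := hl
      ext i
      have := h2 (Fin.zero_le i)
      dsimp only
      omega
    · intro l hl
      ext i
      simp
    · intro l hl
      simp only [Finset.mem_filter, Fintype.mem_piFinset, Finset.mem_range] at hl
      obtain ⟨⟨h1, h2⟩, h3⟩ := hl
      rw [← Matrix.det_mul_row]
      congr 1
      ext i j
      have := h2 (Fin.zero_le i)
      simp only [Matrix.of_apply]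
      rw [show l i + (i : ℕ) = (l i - 1 + i) + 1 by omega, pow_succ']
  · simp only [Finset.mul_sum]
    rw [Finset.sum_comm]
    refine Finset.sum_nbij' (fun l i => l i.succ) (fun l => Fin.cons 0 l) ?_ ?_ ?_ ?_ ?_
    · intro l hl
      simp only [Finset.mem_filter, Fintype.mem_piFinset, Finset.mem_range] at hl ⊢
      obtain ⟨⟨h1, h2⟩, h3⟩ := hl
      exact ⟨fun i => h1 _, fun i j hij => h2 (Fin.succ_le_succ_iff.2 hij)⟩
    · intro l hl
      simp only [Finset.mem_filter, Fintype.mem_piFinset, Finset.mem_range] at hl ⊢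
      obtain ⟨h1, h2⟩ := hl
      refine ⟨⟨fun i => ?_, fun i j => ?_⟩, ?_⟩
      · refine Fin.cases ?_ (fun i => ?_) i
        · simp
        · simpa using h1 i
      · refine Fin.cases ?_ (fun i => ?_) i
        · simp
        · refine Fin.cases ?_ (fun j => ?_) j
          · intro h
            simp at h
          · intro h
            simpa using h2 (Fin.succ_le_succ_iff.1 h)
      · simp
    · intro l hl
      simp only [Finset.mem_filter, Fintype.mem_piFinset, Finset.mem_range] at hl
      obtain ⟨⟨h1, h2⟩, h3⟩ := hl
      ext i
      refine Fin.cases ?_ (fun i => ?_) i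
      · simp
        omega
      · simp
    · intro l hl
      ext i
      simp
    · intro l hl
      simp only [Finset.mem_filter, Fintype.mem_piFinset, Finset.mem_range] at hl
      obtain ⟨⟨h1, h2⟩, h3⟩ := hl
      have h0 : l 0 = 0 := by omega
      have he : (Matrix.of fun i j : Fin (k + 1) => t j ^ (l i + (i : ℕ))) =
          Matrix.of (Fin.cons (fun _ => 1) (fun i j => t j ^ (l i.succ + (i + 1 : ℕ))) :
            Fin (k + 1) → Fin (k + 1) → R) := by
        ext i j
        refine Fin.cases ?_ (fun i => ?_) i <;> simp [h0]
      rw [he, det_of_cons]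
      refine Finset.sum_congr rfl fun j _ => ?_
      rw [mul_assoc, mul_assoc, ← Matrix.det_mul_row, one_mul]
      congr 2
      ext i m
      simp only [Matrix.of_apply]
      ring

/-- Macdonald's bounded Littlewood identity, in the form of a sum of alternants. -/
theorem alternantSum_mul_littlewoodDenom {R : Type*} [CommRing R] [IsDomain R] (n b : ℕ)
    (t : Fin n → R) (ht : ∀ j, 1 + t j ≠ 0) :
    alternantSum n b t * littlewoodDenom t =
      (Matrix.of fun i j : Fin n => t j ^ (i : ℕ) - t j ^ (b + 2 * n - 2 - i)).det := by
  induction n generalizing b with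
  | zero =>
    simp [alternantSum, littlewoodDenom, Subsingleton.monotone]
  | succ k ihk =>
    induction b with
    | zero =>
      have h1 : alternantSum (k + 1) 0 t = 0 := by
        simp [alternantSum]
      rw [h1, zero_mul, Matrix.det_eq_zero_of_row_eq_zero (Fin.last k)]
      intro j
      simp [show 2 * (k + 1) - 2 - k = k by omega]
    | succ b ihb =>
      have h := det_alternant_sub t ht (L := b + 2 * k + 2) (by omega)
      rw [show b + 1 + 2 * (k + 1) - 2 = b + 2 * k + 2 - 1 by omega, h, alternantSum_succ,
        add_mul, mul_assoc, ihb, ← Matrix.det_mul_row, Finset.sum_mul]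
      congr 1
      · congr 1
        ext i j
        simp only [Matrix.of_apply]
        rw [mul_sub, ← pow_succ', ← pow_succ']
        congr 2
        omega
      · refine Finset.sum_congr rfl fun j _ => ?_
        have hk := ihk (b + 1) (fun i => t (j.succAbove i)) fun i => ht _
        rw [littlewoodDenom_succAbove t j]
        have hd : (Matrix.of fun i l : Fin k => t (j.succAbove l) ^ ((i : ℕ) + 1) -
            t (j.succAbove l) ^ (b + 2 * k + 2 - 2 - i)).det =
            (∏ i, t (j.succAbove i)) * (alternantSum k (b + 1) (fun i => t (j.succAbove i)) *
              littlewoodDenom fun i => t (j.succAbove i)) := by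
          rw [hk, ← Matrix.det_mul_row]
          congr 1
          ext i l
          simp only [Matrix.of_apply]
          rw [mul_sub, ← pow_succ', ← pow_succ']
          congr 2
          omega
        rw [hd]
        ring

lemma det_eq_det_sub_of_col_zero {R : Type*} [CommRing R] {n : ℕ}
    (M : Matrix (Fin (n + 1)) (Fin (n + 1)) R) (hM : ∀ i, M i 0 = 1) :
    M.det = (Matrix.of fun i j : Fin n => M i.succ j.succ - M i.castSucc j.succ).det := by
  rw [Matrix.det_eq_of_forall_row_eq_smul_add_pred (A := M)
    (B := Matrix.of (Fin.cons (M 0) (fun i : Fin n => M i.succ - M i.castSucc) :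
      Fin (n + 1) → Fin (n + 1) → R)) (fun _ => 1), Matrix.det_succ_column_zero,
    Fin.sum_univ_succ]
  · simp only [Matrix.of_apply, Fin.cons_zero, Fin.cons_succ, Pi.sub_apply, hM, sub_self,
      mul_zero, zero_mul, Finset.sum_const_zero, add_zero, Fin.val_zero, pow_zero, one_mul]
    congr 1
  · intro j
    simp
  · intro i j
    simp

lemma sum_Icc_pow_add_mul_sub_one {R : Type*} [CommRing R] (z : R) (i : ℕ) {a b : ℕ}
    (hab : a ≤ b) : (z - 1) * ∑ x ∈ Finset.Icc a b, z ^ (x + i) = z ^ (b + 1 + i) - z ^ (a + i) := by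
  induction b, hab using Nat.le_induction with
  | base =>
    simp
    ring
  | succ b hab ih =>
    rw [Finset.sum_Icc_succ_top (by omega), mul_add, ih]
    ring

lemma sum_interlacing_det {R : Type*} [CommRing R] {n : ℕ} (y : R) (l : Fin (n + 1) → ℕ)
    (hl : Monotone l) :
    (∏ j : Fin n, (y ^ ((j : ℕ) + 1) - 1)) *
      ∑ u ∈ Fintype.piFinset (fun i : Fin n => Finset.Icc (l i.castSucc) (l i.succ)),
        (Matrix.of fun i j : Fin n => (y ^ ((j : ℕ) + 1)) ^ (u i + (i : ℕ))).det =
    (Matrix.of fun i j : Fin (n + 1) => (y ^ (j : ℕ)) ^ (l i + (i : ℕ))).det := by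
  have h := MultilinearMap.map_sum_finset
    (Matrix.detRowAlternating (n := Fin n) (R := R)).toMultilinearMap
    (fun (i : Fin n) (x : ℕ) (j : Fin n) => (y ^ ((j : ℕ) + 1)) ^ (x + (i : ℕ)))
    (fun i : Fin n => Finset.Icc (l i.castSucc) (l i.succ))
  rw [det_eq_det_sub_of_col_zero _ fun i => by simp]
  change _ * ∑ u ∈ _, Matrix.detRowAlternating _ = _
  refine (congrArg _ h.symm).trans ?_
  change _ * (Matrix.of fun (i j : Fin n) => (∑ x ∈ Finset.Icc (l i.castSucc) (l i.succ),
    fun j : Fin n => (y ^ ((j : ℕ) + 1)) ^ (x + (i : ℕ))) j).det = _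
  rw [← Matrix.det_mul_row]
  congr 1
  ext i j
  simp only [Matrix.of_apply, Finset.sum_apply, Fin.val_succ, Fin.val_castSucc]
  rw [sum_Icc_pow_add_mul_sub_one _ _ (hl i.castSucc_le_succ)]
  congr 2
  ring

/-- The symmetric `n × n` arrays with entries less than `b` that weakly increase along rows and
columns. -/
noncomputable def symmArrays (n b : ℕ) : Finset (Fin n → Fin n → ℕ) :=
  (Fintype.piFinset fun _ => Fintype.piFinset fun _ => Finset.range b).filter
    fun a => (∀ i j, a i j = a j i) ∧ ∀ j, Monotone fun i => a i j

lemma mem_symmArrays {n b : ℕ} {a : Fin n → Fin n → ℕ} :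
    a ∈ symmArrays n b ↔
      (∀ i j, a i j < b) ∧ (∀ i j, a i j = a j i) ∧ ∀ j, Monotone fun i => a i j := by
  simp [symmArrays]

lemma symmArrays_le {n b : ℕ} {a : Fin n → Fin n → ℕ} (ha : a ∈ symmArrays n b)
    {i j i' j' : Fin n} (hi : i ≤ i') (hj : j ≤ j') : a i j ≤ a i' j' := by
  obtain ⟨-, h2, h3⟩ := mem_symmArrays.1 ha
  refine (h3 j hi).trans ?_
  dsimp only
  rw [h2, h2 i']
  exact h3 i' hj

/-- The array obtained from a symmetric array by removing the main diagonal. -/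
def peelDiag {n : ℕ} (a : Fin (n + 1) → Fin (n + 1) → ℕ) (i j : Fin n) : ℕ :=
  a (min i j).castSucc (max i j).succ

/-- The symmetric array with diagonal `l` and off-diagonal part given by `c`. -/
def addDiag {n : ℕ} (l : Fin (n + 1) → ℕ) (c : Fin n → Fin n → ℕ) (i j : Fin (n + 1)) : ℕ :=
  if h : i < j then c ⟨i, by omega⟩ ⟨j - 1, by omega⟩
  else if h : j < i then c ⟨j, by omega⟩ ⟨i - 1, by omega⟩
  else l i

lemma peelDiag_mem {n b : ℕ} {a : Fin (n + 1) → Fin (n + 1) → ℕ} (ha : a ∈ symmArrays (n + 1) b) :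
    peelDiag a ∈ symmArrays n b := by
  have h := mem_symmArrays.1 ha
  refine mem_symmArrays.2 ⟨fun i j => h.1 _ _, fun i j => ?_, fun j i i' hi => ?_⟩
  · simp only [peelDiag, min_comm, max_comm]
  · exact symmArrays_le ha (Fin.castSucc_le_castSucc_iff.2 (min_le_min_right j hi))
      (Fin.succ_le_succ_iff.2 (max_le_max_right j hi))

lemma addDiag_mem {n b : ℕ} {l : Fin (n + 1) → ℕ} {c : Fin n → Fin n → ℕ}
    (hc : c ∈ symmArrays n b) (hl : ∀ i, l i < b)
    (h1 : ∀ i : Fin n, l i.castSucc ≤ c i i) (h2 : ∀ i : Fin n, c i i ≤ l i.succ) :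
    addDiag l c ∈ symmArrays (n + 1) b := by
  have h := mem_symmArrays.1 hc
  refine mem_symmArrays.2 ⟨fun i j => ?_, fun i j => ?_, fun j => ?_⟩
  · unfold addDiag
    split_ifs
    · exact h.1 _ _
    · exact h.1 _ _
    · exact hl i
  · unfold addDiag
    rcases lt_trichotomy i j with hij | hij | hij
    · rw [dif_pos hij, dif_neg hij.not_gt, dif_pos hij]
    · subst hij
      rfl
    · rw [dif_neg hij.not_gt, dif_pos hij, dif_pos hij]
  · refine Fin.monotone_iff_le_succ.2 fun i => ?_
    unfold addDiag
    rcases lt_trichotomy (j : ℕ) i with hij | hij | hij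
    · have e1 : j < i.castSucc := hij
      have e2 : j < i.succ := e1.trans i.castSucc_lt_succ
      rw [dif_neg e1.not_gt, dif_pos e1, dif_neg e2.not_gt, dif_pos e2]
      exact symmArrays_le hc le_rfl (by simp [Fin.le_def])
    · have e1 : j = i.castSucc := Fin.ext hij
      subst e1
      rw [dif_neg (lt_irrefl _), dif_neg (lt_irrefl _), dif_neg i.castSucc_lt_succ.not_gt,
        dif_pos i.castSucc_lt_succ]
      exact h1 i
    · have e1 : i.castSucc < j := hij
      rw [dif_pos e1]
      rcases eq_or_lt_of_le (show i.succ ≤ j from hij) with e2 | e2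
      · subst e2
        rw [dif_neg (lt_irrefl _), dif_neg (lt_irrefl _)]
        exact h2 i
      · rw [dif_pos e2]
        have e3 : (i : ℕ) + 1 < j := e2
        exact symmArrays_le hc (by simp [Fin.le_def]) le_rfl

lemma addDiag_peelDiag {n b : ℕ} {a : Fin (n + 1) → Fin (n + 1) → ℕ}
    (ha : a ∈ symmArrays (n + 1) b) : addDiag (fun i => a i i) (peelDiag a) = a := by
  have h := mem_symmArrays.1 ha
  have key : ∀ i j : Fin (n + 1), ∀ hij : i < j,
      peelDiag a ⟨i, by omega⟩ ⟨j - 1, by omega⟩ = a i j := by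
    intro i j hij
    have hij' : (i : ℕ) < j := hij
    unfold peelDiag
    rw [min_eq_left (by simp only [Fin.mk_le_mk]; omega),
      max_eq_right (by simp only [Fin.mk_le_mk]; omega)]
    congr 1
    ext
    simp only [Fin.succ_mk]
    omega
  ext i j
  unfold addDiag
  rcases lt_trichotomy i j with hij | hij | hij
  · rw [dif_pos hij, key i j hij]
  · subst hij
    simp
  · rw [dif_neg hij.not_gt, dif_pos hij, key j i hij, h.2.1]

lemma peelDiag_addDiag {n b : ℕ} (l : Fin (n + 1) → ℕ) {c : Fin n → Fin n → ℕ}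
    (hc : c ∈ symmArrays n b) : peelDiag (addDiag l c) = c := by
  have h := mem_symmArrays.1 hc
  ext i j
  unfold peelDiag addDiag
  rw [dif_pos (Fin.castSucc_lt_succ_iff.2 min_le_max)]
  rcases le_total i j with hij | hij
  · simp [hij]
  · simp [hij, h.2.1 i j]

lemma sum_eq_sum_diag_add_peelDiag {n b : ℕ} {a : Fin (n + 1) → Fin (n + 1) → ℕ}
    (ha : a ∈ symmArrays (n + 1) b) :
    ∑ i, ∑ j, a i j = ∑ i, a i i + (∑ i, peelDiag a i i + ∑ i, ∑ j, peelDiag a i j) := by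
  have h := mem_symmArrays.1 ha
  have e1 : ∀ i, ∑ j, a i j = a i i + (∑ j : Fin n, (if j.castSucc < i then a i j.castSucc else 0) +
      ∑ j : Fin n, if i ≤ j.castSucc then a i j.succ else 0) := by
    intro i
    rw [Fin.sum_univ_succAbove _ i, ← Finset.sum_add_distrib]
    congr 1
    refine Finset.sum_congr rfl fun j _ => ?_
    by_cases hj : j.castSucc < i
    · rw [Fin.succAbove_of_castSucc_lt _ _ hj, if_pos hj, if_neg hj.not_ge, add_zero]
    · rw [Fin.succAbove_of_le_castSucc _ _ (not_lt.1 hj), if_neg hj, if_pos (not_lt.1 hj),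
        zero_add]
  simp only [e1, Finset.sum_add_distrib]
  congr 1
  rw [Fin.sum_univ_succ, Fin.sum_univ_castSucc (n := n)]
  simp only [Fin.not_lt_zero, if_false, Finset.sum_const_zero, zero_add,
    Fin.castSucc_lt_succ_iff, Fin.castSucc_le_castSucc_iff,
    (Fin.castSucc_lt_last _).not_ge, add_zero]
  rw [← Finset.sum_add_distrib, ← Finset.sum_add_distrib]
  refine Finset.sum_congr rfl fun i _ => ?_
  rw [← Finset.sum_add_distrib]
  have : peelDiag a i i = ∑ j, if j = i then peelDiag a i i else 0 := by simp
  rw [this, ← Finset.sum_add_distrib]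
  refine Finset.sum_congr rfl fun j _ => ?_
  unfold peelDiag
  rcases lt_trichotomy i j with hij | hij | hij
  · simp [hij.le, hij.not_ge, hij.ne']
  · subst hij
    simp [h.2.1 i.succ]
  · simp [hij.le, hij.not_ge, hij.ne, h.2.1 i.succ]

open PowerSeries in
/-- The generating function of the arrays in `symmArrays n b` with main diagonal `l`. -/
noncomputable def diagGenFun (n b : ℕ) (l : Fin n → ℕ) : PowerSeries ℚ :=
  ∑ a ∈ (symmArrays n b).filter (fun a => (fun i => a i i) = l), X ^ (∑ i, ∑ j, a i j)

open PowerSeries in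
lemma diagGenFun_succ {n b : ℕ} {l : Fin (n + 1) → ℕ} (hl : ∀ i, l i < b) :
    diagGenFun (n + 1) b l = X ^ (∑ i, l i) *
      ∑ u ∈ Fintype.piFinset (fun i : Fin n => Finset.Icc (l i.castSucc) (l i.succ)),
        X ^ (∑ i, u i) * diagGenFun n b u := by
  classical
  unfold diagGenFun
  rw [← Finset.sum_fiberwise_of_maps_to (g := fun a i => peelDiag a i i)
    (t := Fintype.piFinset (fun i : Fin n => Finset.Icc (l i.castSucc) (l i.succ))), Finset.mul_sum]
  · refine Finset.sum_congr rfl fun u hu => ?_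
    rw [Finset.mul_sum, Finset.mul_sum]
    rw [Fintype.mem_piFinset] at hu
    refine Finset.sum_nbij' peelDiag (addDiag l) ?_ ?_ ?_ ?_ ?_
    · intro a ha
      simp only [Finset.mem_filter] at ha ⊢
      exact ⟨peelDiag_mem ha.1.1, ha.2⟩
    · intro c hc
      simp only [Finset.mem_filter] at hc ⊢
      obtain ⟨hc, rfl⟩ := hc
      simp only [Finset.mem_Icc] at hu
      refine ⟨⟨addDiag_mem hc hl (fun i => (hu i).1) (fun i => (hu i).2), ?_⟩, ?_⟩
      · ext i
        simp [addDiag]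
      · rw [peelDiag_addDiag l hc]
    · intro a ha
      simp only [Finset.mem_filter] at ha
      obtain ⟨⟨ha, rfl⟩, -⟩ := ha
      exact addDiag_peelDiag ha
    · intro c hc
      simp only [Finset.mem_filter] at hc
      exact peelDiag_addDiag l hc.1
    · intro a ha
      simp only [Finset.mem_filter] at ha
      obtain ⟨⟨ha, rfl⟩, rfl⟩ := ha
      rw [sum_eq_sum_diag_add_peelDiag ha, pow_add, pow_add]
  · intro a ha
    simp only [Finset.mem_filter] at ha
    obtain ⟨ha, rfl⟩ := ha
    simp only [Fintype.mem_piFinset, Finset.mem_Icc, peelDiag, min_self, max_self]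
    exact fun i => ⟨symmArrays_le ha le_rfl i.castSucc_le_succ,
      symmArrays_le ha i.castSucc_le_succ le_rfl⟩

open PowerSeries in
lemma exists_mul_diagGenFun (n : ℕ) : ∃ c : PowerSeries ℚ, ∀ (b : ℕ) (l : Fin n → ℕ),
    Monotone l → (∀ i, l i < b) → c * diagGenFun n b l =
      (Matrix.of fun i j : Fin n => ((X : PowerSeries ℚ) ^ (2 * (j : ℕ) + 1)) ^ (l i + (i : ℕ))).det := by
  induction n with
  | zero =>
    refine ⟨1, fun b l _ _ => ?_⟩
    have : (symmArrays 0 b).filter (fun a => (fun i => a i i) = l) = {fun i => i.elim0} := by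
      ext a
      simp only [Finset.mem_filter, Finset.mem_singleton, mem_symmArrays]
      constructor
      · intro _
        exact Subsingleton.elim _ _
      · intro _
        exact ⟨⟨fun i => i.elim0, fun i => i.elim0, fun i => i.elim0⟩, Subsingleton.elim _ _⟩
    simp [diagGenFun, this]
  | succ n ih =>
    obtain ⟨c, hc⟩ := ih
    refine ⟨X ^ (∑ i : Fin (n + 1), (i : ℕ)) * (∏ j : Fin n, ((X ^ 2) ^ ((j : ℕ) + 1) - 1)) *
      (X ^ (∑ i : Fin n, (i : ℕ)) * c), fun b l hl hlb => ?_⟩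
    have h1 : ∀ u ∈ Fintype.piFinset (fun i : Fin n => Finset.Icc (l i.castSucc) (l i.succ)),
        (X ^ (∑ i : Fin n, (i : ℕ)) * c) * (X ^ (∑ i, u i) * diagGenFun n b u) =
        (Matrix.of fun i j : Fin n =>
          (((X : PowerSeries ℚ) ^ 2) ^ ((j : ℕ) + 1)) ^ (u i + (i : ℕ))).det := by
      intro u hu
      simp only [Fintype.mem_piFinset, Finset.mem_Icc] at hu
      have hu1 : Monotone u := by
        intro i j hij
        rcases eq_or_lt_of_le hij with rfl | hij
        · rfl
        · exact (hu i).2.trans ((hl (Fin.succ_le_castSucc_iff.2 hij)).trans (hu j).1)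
      have hu2 : ∀ i, u i < b := fun i => (hu i).2.trans_lt (hlb _)
      calc _ = (∏ i : Fin n, (X : PowerSeries ℚ) ^ (u i + (i : ℕ))) * (c * diagGenFun n b u) := by
            rw [Finset.prod_pow_eq_pow_sum, Finset.sum_add_distrib, pow_add]
            ring
        _ = _ := by
            rw [hc b u hu1 hu2, ← Matrix.det_mul_column]
            congr 1
            ext1 i j
            simp only [Matrix.of_apply, ← pow_mul, ← pow_add]
            congr 1
            ring
    have h2 := sum_interlacing_det ((X : PowerSeries ℚ) ^ 2) l hl
    rw [← Finset.sum_congr rfl h1, ← Finset.mul_sum] at h2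
    calc _ = (∏ i : Fin (n + 1), (X : PowerSeries ℚ) ^ (l i + (i : ℕ))) *
          (Matrix.of fun i j : Fin (n + 1) =>
            (((X : PowerSeries ℚ) ^ 2) ^ (j : ℕ)) ^ (l i + (i : ℕ))).det := by
          rw [diagGenFun_succ hlb, ← h2, Finset.prod_pow_eq_pow_sum, Finset.sum_add_distrib,
            pow_add]
          ring
      _ = _ := by
          rw [← Matrix.det_mul_column]
          congr 1
          ext1 i j
          simp only [Matrix.of_apply, ← pow_mul, ← pow_add]
          congr 1
          ring

/-- The cells of the solid whose column heights are given by the array `a`. -/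
def arrayCells {n : ℕ} (a : Fin n → Fin n → ℕ) : Finset (ℕ × ℕ × ℕ) :=
  (Finset.univ.sigma fun p : Fin n × Fin n => Finset.Icc 1 (a p.1 p.2)).map
    ⟨fun s => (n - s.1.1, n - s.1.2, s.2), by
      rintro ⟨⟨i, j⟩, z⟩ ⟨⟨i', j'⟩, z'⟩ h
      simp only [Prod.mk.injEq] at h
      obtain ⟨h1, h2, rfl⟩ := h
      have e1 : i = i' := by omega
      have e2 : j = j' := by omega
      subst e1 e2
      rfl⟩

lemma card_arrayCells {n : ℕ} (a : Fin n → Fin n → ℕ) :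
    (arrayCells a).card = ∑ i, ∑ j, a i j := by
  simp [arrayCells, Finset.card_sigma, Fintype.sum_prod_type]

lemma mem_arrayCells {n : ℕ} {a : Fin n → Fin n → ℕ} {x y z : ℕ} :
    (x, y, z) ∈ arrayCells a ↔
      ∃ i j : Fin n, x = n - i ∧ y = n - j ∧ 1 ≤ z ∧ z ≤ a i j := by
  simp only [arrayCells, Finset.mem_map, Finset.mem_sigma, Finset.mem_univ, true_and,
    Finset.mem_Icc]
  constructor
  · rintro ⟨⟨⟨i, j⟩, w⟩, h, he⟩
    cases he
    exact ⟨i, j, rfl, rfl, h⟩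
  · rintro ⟨i, j, rfl, rfl, h⟩
    exact ⟨⟨⟨i, j⟩, z⟩, h, rfl⟩

lemma sub_mem_arrayCells {n : ℕ} {a : Fin n → Fin n → ℕ} {i j : Fin n} {z : ℕ} :
    (n - i, n - j, z) ∈ arrayCells a ↔ 1 ≤ z ∧ z ≤ a i j := by
  rw [mem_arrayCells]
  constructor
  · rintro ⟨i', j', h1, h2, h⟩
    have e1 : i = i' := by omega
    have e2 : j = j' := by omega
    subst e1 e2
    exact h
  · intro h
    exact ⟨i, j, rfl, rfl, h⟩

/-- The array of column heights of a set of cells, with the highest corner placed last. -/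
noncomputable def columnHeights (n m : ℕ) (P : Finset (ℕ × ℕ × ℕ)) (i j : Fin n) : ℕ :=
  ((Finset.Icc 1 m).filter fun z => (n - i, n - j, z) ∈ P).card

lemma mem_iff_le_columnHeights {n m : ℕ} {P : Finset (ℕ × ℕ × ℕ)} (hP : P ⊆ ppBox n n m)
    (hpp : IsPlanePartition P) (i j : Fin n) (z : ℕ) :
    (n - i, n - j, z) ∈ P ↔ 1 ≤ z ∧ z ≤ columnHeights n m P i j := by
  constructor
  · intro h
    refine ⟨(hpp.1 _ h).2.2, ?_⟩
    have hsub : Finset.Icc 1 z ⊆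
        (Finset.Icc 1 m).filter fun z => (n - (i : ℕ), n - (j : ℕ), z) ∈ P := by
      intro w hw
      rw [Finset.mem_Icc] at hw
      have hw' := hpp.2 _ h (n - i) (n - j) w (by omega) le_rfl (by omega) le_rfl hw.1 hw.2
      refine Finset.mem_filter.2 ⟨?_, hw'⟩
      have := hP hw'
      simp only [ppBox, Finset.mem_product] at this
      exact this.2.2
    have h3 := Finset.card_le_card hsub
    rw [Nat.card_Icc] at h3
    unfold columnHeights
    omega
  · rintro ⟨h1, h2⟩
    by_contra hz
    have hsub : ((Finset.Icc 1 m).filter fun z => (n - (i : ℕ), n - (j : ℕ), z) ∈ P) ⊆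
        Finset.Icc 1 (z - 1) := by
      intro w hw
      obtain ⟨hw1, hw2⟩ := Finset.mem_filter.1 hw
      rw [Finset.mem_Icc] at hw1 ⊢
      refine ⟨hw1.1, ?_⟩
      by_contra hlt
      exact hz (hpp.2 _ hw2 (n - i) (n - j) z (by omega) le_rfl (by omega) le_rfl h1
        (by dsimp only; omega))
    have h3 := Finset.card_le_card hsub
    rw [Nat.card_Icc] at h3
    unfold columnHeights at h2
    omega

lemma columnHeights_mem_symmArrays {n m : ℕ} {P : Finset (ℕ × ℕ × ℕ)}
    (hpp : IsPlanePartition P) (hs : IsSymmetricPP P) :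
    columnHeights n m P ∈ symmArrays n (m + 1) := by
  refine mem_symmArrays.2 ⟨fun i j => ?_, fun i j => ?_, fun j i i' hi => ?_⟩
  · have := Finset.card_filter_le (Finset.Icc 1 m)
      fun z => (n - (i : ℕ), n - (j : ℕ), z) ∈ P
    rw [Nat.card_Icc] at this
    unfold columnHeights
    omega
  · exact congrArg Finset.card (Finset.filter_congr fun z _ => hs _ _ _)
  · refine Finset.card_le_card fun z hz => ?_
    obtain ⟨h1, h2⟩ := Finset.mem_filter.1 hz
    have hi' : (i : ℕ) ≤ i' := hi
    exact Finset.mem_filter.2 ⟨h1, hpp.2 _ h2 _ _ _ (by omega) (by dsimp only; omega) (by omega)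
      le_rfl (Finset.mem_Icc.1 h1).1 le_rfl⟩

lemma arrayCells_subset_ppBox {n m : ℕ} {a : Fin n → Fin n → ℕ} (ha : a ∈ symmArrays n (m + 1)) :
    arrayCells a ⊆ ppBox n n m := by
  rintro ⟨x, y, z⟩ h
  obtain ⟨i, j, rfl, rfl, h1, h2⟩ := mem_arrayCells.1 h
  have := (mem_symmArrays.1 ha).1 i j
  simp only [ppBox, Finset.mem_product, Finset.mem_Icc]
  omega

lemma isPlanePartition_arrayCells {n b : ℕ} {a : Fin n → Fin n → ℕ} (ha : a ∈ symmArrays n b) :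
    IsPlanePartition (arrayCells a) := by
  refine ⟨?_, ?_⟩
  · rintro ⟨x, y, z⟩ h
    obtain ⟨i, j, rfl, rfl, h1, h2⟩ := mem_arrayCells.1 h
    dsimp only
    omega
  · rintro ⟨x, y, z⟩ h x' y' z' hx hx' hy hy' hz hz'
    obtain ⟨i, j, rfl, rfl, h1, h2⟩ := mem_arrayCells.1 h
    dsimp only at hx' hy' hz'
    refine mem_arrayCells.2 ⟨⟨n - x', by omega⟩, ⟨n - y', by omega⟩, by dsimp only; omega,
      by dsimp only; omega, hz, (hz'.trans h2).trans (symmArrays_le ha ?_ ?_)⟩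
    · rw [Fin.le_def]
      dsimp only
      omega
    · rw [Fin.le_def]
      dsimp only
      omega

lemma isSymmetricPP_arrayCells {n b : ℕ} {a : Fin n → Fin n → ℕ} (ha : a ∈ symmArrays n b) :
    IsSymmetricPP (arrayCells a) := by
  have h := (mem_symmArrays.1 ha).2.1
  intro x y z
  rw [mem_arrayCells, mem_arrayCells]
  constructor
  · rintro ⟨i, j, h1, h2, h3, h4⟩
    exact ⟨j, i, h2, h1, h3, h i j ▸ h4⟩
  · rintro ⟨i, j, h1, h2, h3, h4⟩
    exact ⟨j, i, h2, h1, h3, h i j ▸ h4⟩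

lemma arrayCells_columnHeights {n m : ℕ} {P : Finset (ℕ × ℕ × ℕ)} (hP : P ⊆ ppBox n n m)
    (hpp : IsPlanePartition P) : arrayCells (columnHeights n m P) = P := by
  ext ⟨x, y, z⟩
  constructor
  · intro h
    obtain ⟨i, j, rfl, rfl, hz⟩ := mem_arrayCells.1 h
    exact (mem_iff_le_columnHeights hP hpp i j z).2 hz
  · intro h
    have hb := hP h
    simp only [ppBox, Finset.mem_product, Finset.mem_Icc] at hb
    have e1 : x = n - (n - x) := by omega
    have e2 : y = n - (n - y) := by omega
    refine mem_arrayCells.2 ⟨⟨n - x, by omega⟩, ⟨n - y, by omega⟩, e1, e2, ?_⟩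
    refine (mem_iff_le_columnHeights hP hpp _ _ z).1 ?_
    dsimp only
    rwa [← e1, ← e2]

lemma columnHeights_arrayCells {n m : ℕ} {a : Fin n → Fin n → ℕ}
    (ha : a ∈ symmArrays n (m + 1)) : columnHeights n m (arrayCells a) = a := by
  ext i j
  have h := (mem_symmArrays.1 ha).1 i j
  have : ((Finset.Icc 1 m).filter fun z => (n - (i : ℕ), n - (j : ℕ), z) ∈ arrayCells a) =
      Finset.Icc 1 (a i j) := by
    ext z
    simp only [Finset.mem_filter, Finset.mem_Icc, sub_mem_arrayCells]
    omega
  unfold columnHeights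
  rw [this, Nat.card_Icc]
  omega

/-- The generating function of symmetric plane partitions in the box `B(n,n,m)`. -/
noncomputable def symmetricPPGenFun (n m : ℕ) : PowerSeries ℚ :=
  ∑ P ∈ (ppBox n n m).powerset.filter (fun P => IsPlanePartition P ∧ IsSymmetricPP P),
    (PowerSeries.X : PowerSeries ℚ) ^ P.card

open PowerSeries in
lemma symmetricPPGenFun_eq_sum_symmArrays (n m : ℕ) :
    symmetricPPGenFun n m = ∑ a ∈ symmArrays n (m + 1), X ^ (∑ i, ∑ j, a i j) := by
  unfold symmetricPPGenFun
  refine Finset.sum_nbij' (columnHeights n m) arrayCells ?_ ?_ ?_ ?_ ?_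
  · intro P h
    rw [Finset.mem_filter] at h
    exact columnHeights_mem_symmArrays h.2.1 h.2.2
  · intro a ha
    rw [Finset.mem_filter, Finset.mem_powerset]
    exact ⟨arrayCells_subset_ppBox ha, isPlanePartition_arrayCells ha,
      isSymmetricPP_arrayCells ha⟩
  · intro P h
    rw [Finset.mem_filter, Finset.mem_powerset] at h
    exact arrayCells_columnHeights h.1 h.2.1
  · intro a ha
    exact columnHeights_arrayCells ha
  · intro P h
    rw [Finset.mem_filter, Finset.mem_powerset] at h
    rw [← card_arrayCells, arrayCells_columnHeights h.1 h.2.1]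

lemma symmetricPPGenFun_zero (n : ℕ) : symmetricPPGenFun n 0 = 1 := by
  have : (ppBox n n 0).powerset.filter (fun P => IsPlanePartition P ∧ IsSymmetricPP P) = {∅} := by
    have h : ppBox n n 0 = ∅ := by simp [ppBox]
    rw [h, Finset.powerset_empty, Finset.filter_singleton, if_pos]
    simp [IsPlanePartition, IsSymmetricPP]
  rw [symmetricPPGenFun, this]
  simp

open PowerSeries in
lemma exists_mul_symmetricPPGenFun (n : ℕ) : ∃ c : PowerSeries ℚ, ∀ m : ℕ,
    c * symmetricPPGenFun n m =
      alternantSum n (m + 1) fun j => (X : PowerSeries ℚ) ^ (2 * (j : ℕ) + 1) := by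
  obtain ⟨c, hc⟩ := exists_mul_diagGenFun n
  refine ⟨c, fun m => ?_⟩
  rw [symmetricPPGenFun_eq_sum_symmArrays, alternantSum,
    ← Finset.sum_fiberwise_of_maps_to (g := fun a i => a i i)
      (t := (Fintype.piFinset fun _ : Fin n => Finset.range (m + 1)).filter Monotone),
    Finset.mul_sum]
  · refine Finset.sum_congr rfl fun l hl => ?_
    simp only [Finset.mem_filter, Fintype.mem_piFinset, Finset.mem_range] at hl
    rw [← hc (m + 1) l hl.2 hl.1, diagGenFun]
  · intro a ha
    simp only [Finset.mem_filter, Fintype.mem_piFinset, Finset.mem_range]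
    exact ⟨fun i => (mem_symmArrays.1 ha).1 i i, fun i j hij => symmArrays_le ha hij hij⟩

open Polynomial in
/-- The polynomials `p j` with `u ^ (2 * j + 1) - v ^ (2 * j + 1) = (u - v) * p j (u ^ 2 + v ^ 2)`
whenever `u * v = c`. -/
noncomputable def oddPowerQuotient {R : Type*} [CommRing R] (c : R) : ℕ → R[X]
  | 0 => 1
  | 1 => X + C c
  | j + 2 => X * oddPowerQuotient c (j + 1) - C (c ^ 2) * oddPowerQuotient c j

open Polynomial in
lemma sub_mul_eval_oddPowerQuotient {R : Type*} [CommRing R] (u v : R) (j : ℕ) :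
    (u - v) * (oddPowerQuotient (u * v) j).eval (u ^ 2 + v ^ 2) =
      u ^ (2 * j + 1) - v ^ (2 * j + 1) := by
  induction j using Nat.twoStepInduction with
  | zero => simp [oddPowerQuotient]
  | one =>
    simp only [oddPowerQuotient, eval_add, eval_X, eval_C]
    ring
  | more j h1 h2 =>
    simp only [oddPowerQuotient, eval_sub, eval_mul, eval_X, eval_C]
    linear_combination (u ^ 2 + v ^ 2) * h2 - (u * v) ^ 2 * h1

open Polynomial in
lemma oddPowerQuotient_monic {R : Type*} [CommRing R] [Nontrivial R] (c : R) (j : ℕ) :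
    (oddPowerQuotient c j).Monic ∧ (oddPowerQuotient c j).natDegree = j := by
  induction j using Nat.twoStepInduction with
  | zero => simp [oddPowerQuotient]
  | one => exact ⟨monic_X_add_C c, natDegree_X_add_C c⟩
  | more j h1 h2 =>
    have hm : (X * oddPowerQuotient c (j + 1)).Monic := monic_X.mul h2.1
    have hd : (X * oddPowerQuotient c (j + 1)).natDegree = j + 2 := by
      rw [monic_X.natDegree_mul h2.1, natDegree_X, h2.2]
      omega
    have hlt : (C (c ^ 2) * oddPowerQuotient c j).natDegree <
        (X * oddPowerQuotient c (j + 1)).natDegree := by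
      have := natDegree_C_mul_le (c ^ 2) (oddPowerQuotient c j)
      omega
    refine ⟨hm.sub_of_left (degree_lt_degree hlt), ?_⟩
    rw [oddPowerQuotient, natDegree_sub_eq_left_of_natDegree_lt hlt, hd]

lemma det_odd_powers_sub {R : Type*} [CommRing R] [Nontrivial R] {n : ℕ} (u v : Fin n → R) (c : R)
    (h : ∀ i, u i * v i = c) :
    (Matrix.of fun i j : Fin n => u i ^ (2 * (j : ℕ) + 1) - v i ^ (2 * (j : ℕ) + 1)).det =
      (∏ i, (u i - v i)) *
        ∏ i, ∏ j ∈ Finset.Ioi i, (u j ^ 2 + v j ^ 2 - (u i ^ 2 + v i ^ 2)) := by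
  rw [← Matrix.det_vandermonde fun i => u i ^ 2 + v i ^ 2,
    Matrix.det_eval_matrixOfPolynomials_eq_det_vandermonde (fun i => u i ^ 2 + v i ^ 2)
      (fun j => oddPowerQuotient c j) (fun j => (oddPowerQuotient_monic c j).2)
      (fun j => (oddPowerQuotient_monic c j).1), ← Matrix.det_mul_column]
  congr 1
  ext i j
  simp only [Matrix.of_apply]
  rw [← h i, sub_mul_eval_oddPowerQuotient]

lemma prod_Icc_one_eq_prod_fin {R : Type*} [CommMonoid R] (n : ℕ) (f : ℕ → R) :
    ∏ i ∈ Finset.Icc 1 n, f i = ∏ i : Fin n, f (i + 1) := by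
  rw [Fin.prod_univ_eq_prod_range fun i => f (i + 1), Finset.range_eq_Ico,
    Finset.prod_Ico_add' f 0 n 1]
  rfl

lemma prod_Icc_prod_Ioc_eq_prod_fin {R : Type*} [CommMonoid R] (n : ℕ) (g : ℕ → ℕ → R) :
    ∏ i ∈ Finset.Icc 1 n, ∏ j ∈ Finset.Ioc i n, g i j =
      ∏ i : Fin n, ∏ j : Fin n, if i < j then g (i + 1) (j + 1) else 1 := by
  rw [prod_Icc_one_eq_prod_fin]
  refine Finset.prod_congr rfl fun i _ => ?_
  have : Finset.Ioc ((i : ℕ) + 1) n =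
      (Finset.Icc 1 n).filter fun j => (i : ℕ) + 1 < j := by
    ext j
    simp only [Finset.mem_Ioc, Finset.mem_filter, Finset.mem_Icc]
    omega
  rw [this, Finset.prod_filter, prod_Icc_one_eq_prod_fin]
  refine Finset.prod_congr rfl fun j _ => ?_
  simp only [add_lt_add_iff_right, Fin.lt_def]

open PowerSeries in
/-- The numerator of the product formula; its value at `m = 0` is the denominator. -/
noncomputable def macmahonProd (n m : ℕ) : PowerSeries ℚ :=
  (∏ i ∈ Finset.Icc 1 n, (1 - (X : PowerSeries ℚ) ^ (m + 2 * i - 1))) *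
    ∏ i ∈ Finset.Icc 1 n, ∏ j ∈ Finset.Ioc i n, (1 - (X : PowerSeries ℚ) ^ (2 * (m + i + j - 1)))

open PowerSeries in
lemma littlewoodDenom_eq_macmahonProd (n : ℕ) :
    littlewoodDenom (fun j : Fin n => (X : PowerSeries ℚ) ^ (2 * (j : ℕ) + 1)) =
      macmahonProd n 0 := by
  rw [macmahonProd, prod_Icc_one_eq_prod_fin,
    prod_Icc_prod_Ioc_eq_prod_fin n fun i j => 1 - (X : PowerSeries ℚ) ^ (2 * (0 + i + j - 1)),
    littlewoodDenom]
  congr 1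
  · refine Finset.prod_congr rfl fun i _ => ?_
    congr 2
    omega
  · refine Finset.prod_congr rfl fun i _ => Finset.prod_congr rfl fun j _ => ?_
    rw [← pow_add]
    congr 3
    omega

open PowerSeries in
lemma macmahonProd_eq_prod_fin_rev (n m : ℕ) :
    macmahonProd n m = (∏ i : Fin n, (1 - (X : PowerSeries ℚ) ^ (m + 2 * n - 1 - 2 * i))) *
      ∏ i : Fin n, ∏ j ∈ Finset.Ioi i, (1 - (X : PowerSeries ℚ) ^ (2 * (m + 2 * n - 1 - i - j))) := by
  rw [macmahonProd, prod_Icc_one_eq_prod_fin,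
    prod_Icc_prod_Ioc_eq_prod_fin n fun i j => 1 - (X : PowerSeries ℚ) ^ (2 * (m + i + j - 1)),
    ← Equiv.prod_comp Fin.revPerm]
  congr 1
  · refine Finset.prod_congr rfl fun i _ => ?_
    simp only [Fin.revPerm_apply, Fin.val_rev]
    congr 2
    omega
  · rw [Finset.prod_comm, ← Equiv.prod_comp Fin.revPerm]
    refine Finset.prod_congr rfl fun i _ => ?_
    rw [← Equiv.prod_comp Fin.revPerm, ← Finset.prod_filter]
    refine Finset.prod_congr ?_ fun j _ => ?_
    · ext j
      simp
    · simp only [Fin.revPerm_apply, Fin.val_rev]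
      congr 2
      omega

open PowerSeries in
lemma exists_det_eq_mul_macmahonProd (n : ℕ) : ∃ K : PowerSeries ℚ, K ≠ 0 ∧ ∀ m : ℕ,
    (Matrix.of fun i j : Fin n => ((X : PowerSeries ℚ) ^ (2 * (j : ℕ) + 1)) ^ (i : ℕ) -
      ((X : PowerSeries ℚ) ^ (2 * (j : ℕ) + 1)) ^ (m + 1 + 2 * n - 2 - i)).det =
    K * macmahonProd n m := by
  refine ⟨(∏ i : Fin n, X ^ (i : ℕ)) *
    ∏ i : Fin n, ∏ j ∈ Finset.Ioi i, (X ^ (2 * (j : ℕ)) - X ^ (2 * (i : ℕ))), ?_, fun m => ?_⟩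
  · refine mul_ne_zero (Finset.prod_ne_zero_iff.2 fun i _ => pow_ne_zero _ X_ne_zero)
      (Finset.prod_ne_zero_iff.2 fun i _ => Finset.prod_ne_zero_iff.2 fun j hj => ?_)
    have hij : (i : ℕ) < j := by simpa using hj
    intro h
    have h' := congrArg (coeff (2 * (i : ℕ))) (sub_eq_zero.1 h)
    rw [coeff_X_pow, coeff_X_pow, if_neg (by omega), if_pos rfl] at h'
    exact zero_ne_one h'
  · have h := det_odd_powers_sub (fun i : Fin n => (X : PowerSeries ℚ) ^ (i : ℕ))
      (fun i : Fin n => X ^ (m + 1 + 2 * n - 2 - i)) (X ^ (m + 1 + 2 * n - 2)) fun i => by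
        rw [← pow_add]
        congr 1
        omega
    simp only [← pow_mul] at h ⊢
    simp only [mul_comm (2 * ((_ : Fin n) : ℕ) + 1)]
    rw [h, macmahonProd_eq_prod_fin_rev, mul_mul_mul_comm]
    congr 1
    · rw [← Finset.prod_mul_distrib]
      refine Finset.prod_congr rfl fun i _ => ?_
      rw [mul_sub, mul_one, ← pow_add]
      congr 2
      omega
    · rw [← Finset.prod_mul_distrib]
      refine Finset.prod_congr rfl fun i _ => ?_
      rw [← Finset.prod_mul_distrib]
      refine Finset.prod_congr rfl fun j hj => ?_
      have hij : (i : ℕ) < j := by simpa using hj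
      have e1 : (m + 1 + 2 * n - 2 - (j : ℕ)) * 2 =
          2 * (i : ℕ) + 2 * (m + 2 * n - 1 - i - j) := by omega
      have e2 : (m + 1 + 2 * n - 2 - (i : ℕ)) * 2 =
          2 * (j : ℕ) + 2 * (m + 2 * n - 1 - i - j) := by omega
      rw [e1, e2, pow_add, pow_add, mul_comm (i : ℕ) 2, mul_comm (j : ℕ) 2]
      ring

open PowerSeries in
lemma one_sub_X_pow_ne_zero {a : ℕ} (ha : a ≠ 0) : (1 - (X : PowerSeries ℚ) ^ a) ≠ 0 := by
  intro h
  have := congrArg constantCoeff h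
  simp [ha] at this

open PowerSeries in
lemma one_sub_X_pow_inv_mul_self {a : ℕ} (ha : a ≠ 0) :
    (1 - (X : PowerSeries ℚ) ^ a)⁻¹ * (1 - X ^ a) = 1 :=
  PowerSeries.inv_mul_cancel _ (by simp [ha])

lemma macmahonProd_zero_ne_zero (n : ℕ) : macmahonProd n 0 ≠ 0 := by
  refine mul_ne_zero (Finset.prod_ne_zero_iff.2 fun i hi => one_sub_X_pow_ne_zero ?_)
    (Finset.prod_ne_zero_iff.2 fun i hi => Finset.prod_ne_zero_iff.2 fun j hj =>
      one_sub_X_pow_ne_zero ?_)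
  · rw [Finset.mem_Icc] at hi
    omega
  · rw [Finset.mem_Icc] at hi
    rw [Finset.mem_Ioc] at hj
    omega

open PowerSeries in
lemma symmetricPPGenFun_mul_macmahonProd_zero (n m : ℕ) :
    symmetricPPGenFun n m * macmahonProd n 0 = macmahonProd n m := by
  obtain ⟨c, hc⟩ := exists_mul_symmetricPPGenFun n
  obtain ⟨K, hK, hdet⟩ := exists_det_eq_mul_macmahonProd n
  have key : ∀ m, c * symmetricPPGenFun n m * macmahonProd n 0 = K * macmahonProd n m := by
    intro m
    rw [hc, ← hdet, ← littlewoodDenom_eq_macmahonProd, alternantSum_mul_littlewoodDenom]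
    intro j h
    have := congrArg constantCoeff h
    simp at this
  have h0 := key 0
  rw [symmetricPPGenFun_zero, mul_one] at h0
  have hcK := mul_right_cancel₀ (macmahonProd_zero_ne_zero n) h0
  apply mul_left_cancel₀ hK
  rw [← mul_assoc, ← key m, hcK]

/-- **MacMahon's conjecture** (proved by Andrews and Macdonald): the generating function
for symmetric plane partitions contained in the box `B(n,n,m)`, each weighted by `q^|P|`,
equals `∏_{i=1}^n (1-q^{m+2i-1})/(1-q^{2i-1})
  ∏_{1≤i<j≤n} (1-q^{2(m+i+j-1)})/(1-q^{2(i+j-1)})` in `ℚ[[q]]`. -/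
theorem macmahon_symmetric_pp (m n : ℕ) (hm : 0 < m) (hn : 0 < n) :
    ∑ P ∈ (ppBox n n m).powerset.filter
        (fun P => IsPlanePartition P ∧ IsSymmetricPP P),
      (PowerSeries.X : PowerSeries ℚ) ^ P.card =
    (∏ i ∈ Finset.Icc 1 n,
        (1 - (PowerSeries.X : PowerSeries ℚ) ^ (m + 2 * i - 1)) *
          (1 - (PowerSeries.X : PowerSeries ℚ) ^ (2 * i - 1))⁻¹) *
      ∏ i ∈ Finset.Icc 1 n, ∏ j ∈ Finset.Ioc i n,
        (1 - (PowerSeries.X : PowerSeries ℚ) ^ (2 * (m + i + j - 1))) *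
          (1 - (PowerSeries.X : PowerSeries ℚ) ^ (2 * (i + j - 1)))⁻¹ := by
  have h := symmetricPPGenFun_mul_macmahonProd_zero n m
  refine mul_right_cancel₀ (macmahonProd_zero_ne_zero n) (h.trans ?_)
  have h1 : (∏ i ∈ Finset.Icc 1 n, (1 - (PowerSeries.X : PowerSeries ℚ) ^ (2 * i - 1))⁻¹) *
      ∏ i ∈ Finset.Icc 1 n, (1 - (PowerSeries.X : PowerSeries ℚ) ^ (0 + 2 * i - 1)) = 1 := by
    rw [← Finset.prod_mul_distrib]
    refine Finset.prod_eq_one fun i hi => ?_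
    rw [Finset.mem_Icc] at hi
    rw [zero_add]
    exact one_sub_X_pow_inv_mul_self (by omega)
  have h2 : (∏ i ∈ Finset.Icc 1 n, ∏ j ∈ Finset.Ioc i n,
        (1 - (PowerSeries.X : PowerSeries ℚ) ^ (2 * (i + j - 1)))⁻¹) *
      ∏ i ∈ Finset.Icc 1 n, ∏ j ∈ Finset.Ioc i n,
        (1 - (PowerSeries.X : PowerSeries ℚ) ^ (2 * (0 + i + j - 1))) = 1 := by
    rw [← Finset.prod_mul_distrib]
    refine Finset.prod_eq_one fun i hi => ?_
    rw [← Finset.prod_mul_distrib]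
    refine Finset.prod_eq_one fun j hj => ?_
    rw [Finset.mem_Icc] at hi
    rw [Finset.mem_Ioc] at hj
    rw [zero_add]
    exact one_sub_X_pow_inv_mul_self (by omega)
  simp only [Finset.prod_mul_distrib]
  rw [macmahonProd, macmahonProd, mul_mul_mul_comm, mul_assoc _ _ (∏ i ∈ _, _), h1, mul_one,
    mul_assoc _ _ (∏ i ∈ _, _), h2, mul_one]
end
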